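/- arXiv:2506.02293 — 11 statements merged into one kernel-verified Lean document; each statement's English description precedes it below -/
import Mathlib

section
/- For x, y ∈ ℝⁿ the following are equivalent: (i) Σ_{i=1}^n f(x_i) = Σ_{i=1}^n f(y_i) for every continuous f : ℝ → ℝ; (ii) Σ_{i=1}^n f(x_i, Σ_{j=1}^n x_j) = Σ_{i=1}^n f(y_i, Σ_{j=1}^n y_j) for every continuous f : ℝ² → ℝ; (iii) there exists a permutation σ of {1,…,n} with y_i = x_{σ(i)} for all i, i.e., x and y lie in the same orbit of the standard permutation action of Sₙ on ℝⁿ. -/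
/-!
Applying (ii) to functions of the first coordinate gives (i), so everything reduces to
(i) ⟹ (iii). For `a : ℝ`, Lagrange interpolation gives a polynomial that agrees with the indicator
function of `{a}` at all coordinates of `x` and `y`; for this polynomial (i) says that `a` occurs
equally often in `x` and in `y` (`card_fiber_eq_of_sum_eq`). Gluing bijections between the fibres
then gives the permutation. The implications out of (iii) are reindexing of finite sums.
-/

/-- If continuous functions do not separate `x` from `y`, every real number occurs equally often
among the coordinates of `x` and of `y`. -/
lemma card_fiber_eq_of_sum_eq {n : ℕ} {x y : Fin n → ℝ}
    (h : ∀ f : C(ℝ, ℝ), ∑ i, f (x i) = ∑ i, f (y i)) (a : ℝ) :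
    Fintype.card {i // y i = a} = Fintype.card {i // x i = a} := by
  classical
  let s : Finset ℝ := Finset.univ.image x ∪ Finset.univ.image y
  let p : Polynomial ℝ := Lagrange.interpolate s id (fun b => if b = a then 1 else 0)
  have hp : ∀ b ∈ s, p.eval b = if b = a then 1 else 0 := fun b hb =>
    Lagrange.eval_interpolate_at_node (v := id) _ (Function.injective_id.injOn) hb
  have hx : ∀ i, p.eval (x i) = if x i = a then 1 else 0 := fun i => hp _ (by simp [s])
  have hy : ∀ i, p.eval (y i) = if y i = a then 1 else 0 := fun i => hp _ (by simp [s])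
  have key := h ⟨fun t => p.eval t, p.continuous⟩
  simp only [ContinuousMap.coe_mk, hx, hy, Finset.sum_boole] at key
  rw [Fintype.card_subtype, Fintype.card_subtype]
  exact_mod_cast key.symm

lemma exists_perm_of_sum_eq {n : ℕ} {x y : Fin n → ℝ}
    (h : ∀ f : C(ℝ, ℝ), ∑ i, f (x i) = ∑ i, f (y i)) :
    ∃ σ : Equiv.Perm (Fin n), ∀ i, y i = x (σ i) :=
  ⟨Equiv.ofFiberEquiv fun a => Fintype.equivOfCardEq (card_fiber_eq_of_sum_eq h a),
    fun i => (Equiv.ofFiberEquiv_map _ i).symm⟩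

/-- For `x, y ∈ ℝⁿ`, the following are equivalent:
(i) `∑ i, f (x i) = ∑ i, f (y i)` for every continuous `f : ℝ → ℝ`;
(ii) `∑ i, f (x i, ∑ j, x j) = ∑ i, f (y i, ∑ j, y j)` for every continuous `f : ℝ² → ℝ`;
(iii) `x` and `y` lie in the same orbit of the permutation action of `Sₙ` on `ℝⁿ`. -/
theorem stmt_1 (n : ℕ) (x y : Fin n → ℝ) :
    ((∀ f : C(ℝ, ℝ), ∑ i, f (x i) = ∑ i, f (y i)) ↔
      ∃ σ : Equiv.Perm (Fin n), ∀ i, y i = x (σ i)) ∧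
    ((∀ f : C(ℝ × ℝ, ℝ), ∑ i, f (x i, ∑ j, x j) = ∑ i, f (y i, ∑ j, y j)) ↔
      ∃ σ : Equiv.Perm (Fin n), ∀ i, y i = x (σ i)) := by
  refine ⟨⟨exists_perm_of_sum_eq, ?_⟩, ⟨fun h => exists_perm_of_sum_eq fun f => ?_, ?_⟩⟩
  · rintro ⟨σ, hσ⟩ f
    simp only [hσ]
    exact (Equiv.sum_comp σ fun i => f (x i)).symm
  · exact h (f.comp ⟨Prod.fst, continuous_fst⟩)
  · rintro ⟨σ, hσ⟩ f
    simp only [hσ]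
    rw [Equiv.sum_comp σ x]
    exact (Equiv.sum_comp σ fun i => f (x i, ∑ j, x j)).symm
end

section
/- For every integer n ≥ 2, the function x ↦ (x₁ + ⋯ + xₙ)ⁿ on ℝⁿ does not belong to the closure, in the topology of uniform convergence on compact sets, of the set of functions of the form x ↦ Σ_{i=1}^n f(x_i) with f : ℝ → ℝ continuous. -/
/-!
With `e₀, e₁` two distinct basis vectors, the mixed difference
`g ↦ g (e₀ + e₁) + g 0 - g e₀ - g e₁` is continuous in the compact-open topology. It vanishes on every
`x ↦ ∑ i, f (x i)`, hence on the closure of this set, but equals `2 ^ n - 2 > 0` (for `n ≥ 2`) on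
`x ↦ (∑ i, x i) ^ n`.
-/


/-- For every `n ≥ 2`, the function `x ↦ (x₁ + ⋯ + xₙ)ⁿ` on `ℝⁿ` does not
belong to the closure (uniform convergence on compact sets, i.e. the compact-open topology on
`C(ℝⁿ, ℝ)`) of the set of functions of the form `x ↦ ∑ i, f (x i)` with `f : ℝ → ℝ` continuous. -/
theorem stmt_2 (n : ℕ) (hn : 2 ≤ n) :
    (⟨fun x => (∑ i, x i) ^ n,
        (continuous_finset_sum _ fun i _ => continuous_apply i).pow n⟩ : C(Fin n → ℝ, ℝ)) ∉
      closure {g : C(Fin n → ℝ, ℝ) | ∃ f : C(ℝ, ℝ), ∀ x, g x = ∑ i, f (x i)} := by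
  intro hmem
  obtain ⟨i, j, hij⟩ : ∃ i j : Fin n, i ≠ j := ⟨⟨0, by omega⟩, ⟨1, by omega⟩, by simp⟩
  let a : Fin n → ℝ := Pi.single i 1
  let b : Fin n → ℝ := Pi.single j 1
  have hclosed : IsClosed {g : C(Fin n → ℝ, ℝ) | g (a + b) + g 0 = g a + g b} :=
    isClosed_eq
      ((continuous_eval_const _).add (continuous_eval_const _))
      ((continuous_eval_const _).add (continuous_eval_const _))
  have hsub : {g : C(Fin n → ℝ, ℝ) | ∃ f : C(ℝ, ℝ), ∀ x, g x = ∑ i, f (x i)} ⊆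
      {g : C(Fin n → ℝ, ℝ) | g (a + b) + g 0 = g a + g b} := by
    rintro g ⟨f, hf⟩
    simp only [Set.mem_ofPred_eq, hf, ← Finset.sum_add_distrib]
    refine Finset.sum_congr rfl fun k _ => ?_
    -- At each coordinate `k`, at least one of `a k`, `b k` is zero.
    by_cases hk : k = i
    · have hb : b k = 0 := Pi.single_eq_of_ne (hk ▸ hij) _
      simp [hb]
    · have ha : a k = 0 := Pi.single_eq_of_ne hk _
      simp [ha, add_comm]
  have key := closure_minimal hsub hclosed hmem
  have ha : ∑ k, a k = 1 := by simp [a]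
  have hb : ∑ k, b k = 1 := by simp [b]
  have hn0 : n ≠ 0 := by omega
  simp only [Set.mem_ofPred_eq, ContinuousMap.coe_mk, Pi.add_apply, Finset.sum_add_distrib, ha, hb,
    Pi.zero_apply, Finset.sum_const_zero, one_pow, zero_pow hn0] at key
  have h4 : (2 : ℝ) ^ 2 ≤ 2 ^ n := pow_le_pow_right₀ (by norm_num) hn
  norm_num at key h4
  linarith
end

section
/- For every integer n ≥ 2, the closure (in the topology of uniform convergence on compact sets) of {x ↦ Σ_{i=1}^n f(x_i) : f ∈ C(ℝ)} is a proper subset of the closure of {x ↦ Σ_{i=1}^n f(x_i, Σ_{j=1}^n x_j) : f ∈ C(ℝ²)}; in particular, x ↦ (x₁+⋯+xₙ)ⁿ lies in the latter closure but not in the former. -/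
/-!
Membership in the larger closure and the inclusion are immediate: take `f (a, s) = s ^ n / n`,
respectively an `f` that ignores its second argument. What separates the two closures is the mixed
second difference `g (e₀ + e₁) + g 0 - g e₀ - g e₁`: it is a continuous functional of `g` that
vanishes on every `x ↦ ∑ i, f (x i)`, hence on their closure (`mixed_difference_eq_zero`), whereas
on `x ↦ (x₁ + ⋯ + xₙ) ^ n` it equals `2 ^ n - 2 > 0`.
-/

/-- The mixed second difference in the first two coordinates, based at the origin, vanishes on the
closure of the separable sums: point evaluations are continuous in the compact-open topology. -/
theorem mixed_difference_eq_zero {m : ℕ} {g : C(Fin (m + 2) → ℝ, ℝ)}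
    (hg : g ∈ closure {g : C(Fin (m + 2) → ℝ, ℝ) | ∃ f : C(ℝ, ℝ), ∀ x, g x = ∑ i, f (x i)}) :
    g (Fin.cons 1 (Fin.cons 1 0)) + g (Fin.cons 0 (Fin.cons 0 0)) =
      g (Fin.cons 1 (Fin.cons 0 0)) + g (Fin.cons 0 (Fin.cons 1 0)) := by
  have hclosed : IsClosed {g : C(Fin (m + 2) → ℝ, ℝ) |
      g (Fin.cons 1 (Fin.cons 1 0)) + g (Fin.cons 0 (Fin.cons 0 0)) =
        g (Fin.cons 1 (Fin.cons 0 0)) + g (Fin.cons 0 (Fin.cons 1 0))} :=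
    isClosed_eq
      ((continuous_eval_const _).add (continuous_eval_const _))
      ((continuous_eval_const _).add (continuous_eval_const _))
  refine closure_minimal ?_ hclosed hg
  rintro g ⟨f, hf⟩
  simp only [Set.mem_ofPred_eq, hf, Fin.sum_univ_succ, Fin.cons_zero, Fin.cons_succ]
  ring


/-- For every `n ≥ 2`, the closure (uniform convergence on compact sets) of
`{x ↦ ∑ i, f (x i) : f ∈ C(ℝ)}` is a proper subset of the closure of
`{x ↦ ∑ i, f (x i, ∑ j, x j) : f ∈ C(ℝ²)}`; in particular `x ↦ (x₁ + ⋯ + xₙ)ⁿ` lies in the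
latter closure but not in the former. -/
theorem stmt_4 (n : ℕ) (hn : 2 ≤ n) :
    closure {g : C(Fin n → ℝ, ℝ) | ∃ f : C(ℝ, ℝ), ∀ x, g x = ∑ i, f (x i)} ⊂
      closure {g : C(Fin n → ℝ, ℝ) |
        ∃ f : C(ℝ × ℝ, ℝ), ∀ x, g x = ∑ i, f (x i, ∑ j, x j)} ∧
    (⟨fun x => (∑ i, x i) ^ n,
        (continuous_finset_sum _ fun i _ => continuous_apply i).pow n⟩ : C(Fin n → ℝ, ℝ)) ∈
      closure {g : C(Fin n → ℝ, ℝ) |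
        ∃ f : C(ℝ × ℝ, ℝ), ∀ x, g x = ∑ i, f (x i, ∑ j, x j)} ∧
    (⟨fun x => (∑ i, x i) ^ n,
        (continuous_finset_sum _ fun i _ => continuous_apply i).pow n⟩ : C(Fin n → ℝ, ℝ)) ∉
      closure {g : C(Fin n → ℝ, ℝ) | ∃ f : C(ℝ, ℝ), ∀ x, g x = ∑ i, f (x i)} := by
  have hsub : {g : C(Fin n → ℝ, ℝ) | ∃ f : C(ℝ, ℝ), ∀ x, g x = ∑ i, f (x i)} ⊆
      {g : C(Fin n → ℝ, ℝ) | ∃ f : C(ℝ × ℝ, ℝ), ∀ x, g x = ∑ i, f (x i, ∑ j, x j)} := by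
    rintro g ⟨f, hf⟩
    exact ⟨f.comp ⟨Prod.fst, continuous_fst⟩, hf⟩
  have hmem : (⟨fun x => (∑ i, x i) ^ n,
        (continuous_finset_sum _ fun i _ => continuous_apply i).pow n⟩ : C(Fin n → ℝ, ℝ)) ∈
      closure {g : C(Fin n → ℝ, ℝ) |
        ∃ f : C(ℝ × ℝ, ℝ), ∀ x, g x = ∑ i, f (x i, ∑ j, x j)} := by
    refine subset_closure ⟨⟨fun p => p.2 ^ n / n, by fun_prop⟩, fun x => ?_⟩
    have hn0 : (n : ℝ) ≠ 0 := by positivity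
    simp only [ContinuousMap.coe_mk, Finset.sum_const, Finset.card_univ, Fintype.card_fin,
      nsmul_eq_mul]
    field_simp
  have hnot : (⟨fun x => (∑ i, x i) ^ n,
        (continuous_finset_sum _ fun i _ => continuous_apply i).pow n⟩ : C(Fin n → ℝ, ℝ)) ∉
      closure {g : C(Fin n → ℝ, ℝ) | ∃ f : C(ℝ, ℝ), ∀ x, g x = ∑ i, f (x i)} := by
    intro h
    obtain ⟨m, rfl⟩ := Nat.exists_eq_add_of_le' hn
    have key := mixed_difference_eq_zero h
    simp [Fin.sum_univ_succ] at key
    have h1 : (1 : ℝ) ≤ 2 ^ m := one_le_pow₀ (by norm_num)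
    rw [one_add_one_eq_two, pow_add] at key
    linarith
  exact ⟨⟨closure_mono hsub, fun h => hnot (h hmem)⟩, hmem, hnot⟩
end

section
/- Let φ₁, …, φ_ℓ : ℝⁿ → ℝ^d be linear maps and let f : ℝⁿ → ℝ be continuous. Suppose there exist vectors c₁ ∈ ker φ₁, …, c_ℓ ∈ ker φ_ℓ and a smooth compactly supported function g : ℝⁿ → ℝ such that ∫_{ℝⁿ} f(x) · (D_{c₁} ⋯ D_{c_ℓ} g)(x) dx ≠ 0 (i.e., the distributional derivative D_{c₁}⋯D_{c_ℓ} f is nonzero). Then f does not belong to the closure, in the topology of uniform convergence on compact sets, of the set of superpositions {x ↦ Σ_{α=1}^ℓ f_α(φ_α(x)) : f₁, …, f_ℓ ∈ C(ℝ^d)}. -/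
/-!
The functional `G ↦ ∫ G · D_{c₁} ⋯ D_{c_ℓ} g` is continuous on `C(ℝⁿ, ℝ)` for the compact-open
topology, because the test function `D_{c₁} ⋯ D_{c_ℓ} g` is continuous with compact support
(`continuous_integral_mul`). It vanishes on every superposition: for the summand `f_α ∘ φ_α`,
directional derivatives commute (`dirDerivs_perm`), so `D_{c_α}` can be moved to the outermost
position, and `f_α ∘ φ_α` is constant along the direction `c_α ∈ ker φ_α`, so that integration by
parts in that direction gives zero (`integral_mul_dirDeriv_eq_zero`). Hence the functional vanishes
on the closure of the superpositions, while it is nonzero at `F`.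
-/

open MeasureTheory

/-- The directional derivative operator `D_c` applied to `g : ℝⁿ → ℝ`:
`(D_c g)(x) = c₁ ∂₁g(x) + ⋯ + cₙ ∂ₙg(x) = Dg(x)[c]`. -/
noncomputable def dirDeriv (n : ℕ) (c : Fin n → ℝ) (g : (Fin n → ℝ) → ℝ) :
    (Fin n → ℝ) → ℝ :=
  fun x => fderiv ℝ g x c

/-- Iterated directional derivatives: `dirDerivs n [c₁, …, c_ℓ] g = D_{c₁} (⋯ (D_{c_ℓ} g))`. -/
noncomputable def dirDerivs (n : ℕ) : List (Fin n → ℝ) → ((Fin n → ℝ) → ℝ) → (Fin n → ℝ) → ℝ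
  | [], g => g
  | c :: cs, g => dirDeriv n c (dirDerivs n cs g)

theorem contDiff_dirDeriv {n : ℕ} (c : Fin n → ℝ) {g : (Fin n → ℝ) → ℝ}
    (hg : ContDiff ℝ (⊤ : ℕ∞) g) : ContDiff ℝ (⊤ : ℕ∞) (dirDeriv n c g) :=
  (hg.fderiv_right (m := (⊤ : ℕ∞)) (by simp)).clm_apply contDiff_const

theorem contDiff_dirDerivs {n : ℕ} (cs : List (Fin n → ℝ)) {g : (Fin n → ℝ) → ℝ}
    (hg : ContDiff ℝ (⊤ : ℕ∞) g) : ContDiff ℝ (⊤ : ℕ∞) (dirDerivs n cs g) := by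
  induction cs with
  | nil => exact hg
  | cons c cs ih => exact contDiff_dirDeriv c ih

theorem hasCompactSupport_dirDerivs {n : ℕ} (cs : List (Fin n → ℝ)) {g : (Fin n → ℝ) → ℝ}
    (hg : HasCompactSupport g) : HasCompactSupport (dirDerivs n cs g) := by
  induction cs with
  | nil => exact hg
  | cons c cs ih => exact ih.fderiv_apply ℝ c

theorem dirDeriv_comm {n : ℕ} (a b : Fin n → ℝ) {g : (Fin n → ℝ) → ℝ}
    (hg : ContDiff ℝ (⊤ : ℕ∞) g) :
    dirDeriv n a (dirDeriv n b g) = dirDeriv n b (dirDeriv n a g) := by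
  have hd : Differentiable ℝ (fderiv ℝ g) :=
    (hg.fderiv_right (m := (⊤ : ℕ∞)) (by simp)).differentiable (by simp)
  have key : ∀ (u v x : Fin n → ℝ),
      dirDeriv n u (dirDeriv n v g) x = fderiv ℝ (fderiv ℝ g) x u v := by
    intro u v x
    have h := (hd x).hasFDerivAt.clm_apply (hasFDerivAt_const v x)
    unfold dirDeriv
    rw [h.fderiv]
    simp
  funext x
  rw [key, key]
  exact (hg.contDiffAt.isSymmSndFDerivAt
    (by rw [minSmoothness_of_isRCLikeNormedField]; exact WithTop.coe_le_coe.2 (le_top : (2 : ℕ∞) ≤ ⊤))) a b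

theorem dirDerivs_perm {n : ℕ} {cs cs' : List (Fin n → ℝ)} (h : cs.Perm cs')
    {g : (Fin n → ℝ) → ℝ} (hg : ContDiff ℝ (⊤ : ℕ∞) g) :
    dirDerivs n cs g = dirDerivs n cs' g := by
  induction h with
  | nil => rfl
  | cons c _ ih => simp only [dirDerivs, ih]
  | swap a b l => exact dirDeriv_comm b a (contDiff_dirDerivs l hg)
  | trans _ _ ih₁ ih₂ => exact ih₁.trans ih₂

/-- No differentiability of `h` is needed: constancy along the lines of direction `c` makes its
line derivative in that direction exist and vanish, which suffices for integrating by parts. -/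
theorem integral_mul_dirDeriv_eq_zero {n : ℕ} (c : Fin n → ℝ) {h G : (Fin n → ℝ) → ℝ}
    (hh : Continuous h) (hc : ∀ x (t : ℝ), h (x + t • c) = h x)
    (hG : ContDiff ℝ (⊤ : ℕ∞) G) (hGs : HasCompactSupport G) :
    ∫ x, h x * dirDeriv n c G x = 0 := by
  have hI : ∀ {k : (Fin n → ℝ) → ℝ}, Continuous k → HasCompactSupport k →
      Integrable (fun x => h x * k x) := fun hk hks =>
    (hh.mul hk).integrable_of_hasCompactSupport hks.mul_left
  have := integral_bilinear_hasLineDerivAt_right_eq_neg_left_of_integrable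
    (μ := (volume : Measure (Fin n → ℝ))) (f := h) (f' := fun _ => 0) (g := G)
    (g' := dirDeriv n c G) (v := c) (B := ContinuousLinearMap.mul ℝ ℝ)
    (by simp) (by simpa using hI (contDiff_dirDeriv c hG).continuous (hGs.fderiv_apply ℝ c))
    (by simpa using hI hG.continuous hGs)
    (fun x _ => by
      simpa only [HasLineDerivAt, hc] using hasDerivAt_const (0 : ℝ) (h x))
    (fun x _ => (hG.differentiable (by simp) x).hasFDerivAt.hasLineDerivAt c)
  simpa using this

theorem continuous_integral_mul {n : ℕ} {k : (Fin n → ℝ) → ℝ} (hk : Continuous k)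
    (hks : HasCompactSupport k) :
    Continuous fun G : C(Fin n → ℝ, ℝ) => ∫ x, G x * k x := by
  rw [← continuousOn_univ]
  refine continuousOn_integral_of_compact_support (k := tsupport k) hks ?_ ?_
  · refine Continuous.continuousOn ?_
    simp only [Function.uncurry_def]
    fun_prop
  · intro G x _ hx
    rw [image_eq_zero_of_notMem_tsupport hx, mul_zero]

/-- Let `φ₁, …, φ_ℓ : ℝⁿ → ℝ^d` be linear and `F : ℝⁿ → ℝ` continuous.
If there are `c_α ∈ ker φ_α` and a smooth compactly supported `g` with
`∫ F(x) · (D_{c₁} ⋯ D_{c_ℓ} g)(x) dx ≠ 0`, then `F` is not in the closure (uniform convergence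
on compact sets) of the superpositions `x ↦ ∑ α, f_α (φ_α x)`, `f_α ∈ C(ℝ^d)`. -/
theorem stmt_6 (n d ℓ : ℕ) (φ : Fin ℓ → ((Fin n → ℝ) →ₗ[ℝ] (Fin d → ℝ)))
    (F : C(Fin n → ℝ, ℝ))
    (c : Fin ℓ → (Fin n → ℝ)) (hc : ∀ α, c α ∈ LinearMap.ker (φ α))
    (g : (Fin n → ℝ) → ℝ) (hg : ContDiff ℝ (⊤ : ℕ∞) g) (hgsupp : HasCompactSupport g)
    (hint : (∫ x : Fin n → ℝ, F x * dirDerivs n (List.ofFn c) g x) ≠ 0) :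
    F ∉ closure {G : C(Fin n → ℝ, ℝ) |
      ∃ f : Fin ℓ → C(Fin d → ℝ, ℝ), ∀ x, G x = ∑ α, f α (φ α x)} := by
  have hψ := (contDiff_dirDerivs (List.ofFn c) hg).continuous
  have hψs := hasCompactSupport_dirDerivs (List.ofFn c) hgsupp
  have hclosed : IsClosed {G : C(Fin n → ℝ, ℝ) |
      ∫ x, G x * dirDerivs n (List.ofFn c) g x = 0} :=
    isClosed_eq (continuous_integral_mul hψ hψs) continuous_const
  refine fun hF => hint (closure_minimal ?_ hclosed hF)
  rintro G ⟨f, hf⟩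
  have hcont : ∀ α, Continuous fun x => f α (φ α x) := fun α =>
    (f α).continuous.comp (φ α).continuous_of_finiteDimensional
  simp only [Set.mem_ofPred_eq, hf, Finset.sum_mul]
  have hint' : ∀ α, Integrable fun x => f α (φ α x) * dirDerivs n (List.ofFn c) g x := fun α =>
    ((hcont α).mul hψ).integrable_of_hasCompactSupport hψs.mul_left
  rw [integral_finsetSum _ fun α _ => hint' α]
  refine Finset.sum_eq_zero fun α _ => ?_
  have hmem : c α ∈ List.ofFn c := by simp
  rw [dirDerivs_perm (List.perm_cons_erase hmem) hg]
  refine integral_mul_dirDeriv_eq_zero (c α) (hcont α) (fun x t => ?_)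
    (contDiff_dirDerivs _ hg) (hasCompactSupport_dirDerivs _ hgsupp)
  rw [map_add, map_smul, LinearMap.mem_ker.mp (hc α), smul_zero, add_zero]
end

section
/- Let (p_m)_{m ∈ ℕ} be a sequence of real polynomials in d variables whose associated functions converge uniformly on every compact subset of ℝ^d to the function of a polynomial p, and let P be a real polynomial in d variables. If the constant-coefficient differential operator P(∂₁,…,∂_d) annihilates every p_m (i.e., P(∂)p_m is the zero polynomial for all m), then P(∂₁,…,∂_d) annihilates p. -/
/-!
Locally uniform convergence `p m → q` implies weak convergence, i.e. convergence of
`∫ p m * φ` to `∫ q * φ` for each smooth compactly supported `φ`. Integration by parts moves a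
derivative onto `φ` (`integral_pderiv_mul`), so weak convergence, unlike uniform convergence, is
inherited by partial derivatives (`WeakTendsto.pderiv`), hence by `P(∂)` (`WeakTendsto.diffOp`).
If `P(∂) (p m) = 0` for all `m`, then `P(∂) q` is a weak limit of zeros, so it integrates to zero
against every test function; being a polynomial, it vanishes.
-/

open MvPolynomial

/-- The iterated formal partial derivative operator `∂^α = ∂₁^{α 1} ∘ ⋯ ∘ ∂_d^{α d}` on
multivariate polynomials, for a multi-exponent `α`. -/
noncomputable def pderivPow (d : ℕ) (α : Fin d →₀ ℕ) :
    Module.End ℝ (MvPolynomial (Fin d) ℝ) :=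
  ((List.finRange d).map fun i => ((pderiv i : Derivation ℝ _ _).toLinearMap) ^ (α i)).prod

/-- The constant-coefficient differential operator `P(∂₁, …, ∂_d)` associated with a polynomial
`P = ∑_α a_α x^α`, acting on polynomials by `P(∂) q = ∑_α a_α ∂^α q`. -/
noncomputable def diffOp (d : ℕ) (P q : MvPolynomial (Fin d) ℝ) : MvPolynomial (Fin d) ℝ :=
  ∑ α ∈ P.support, P.coeff α • pderivPow d α q

open MeasureTheory Filter Topology
open scoped ContDiff

/-- Weak convergence of a sequence of polynomials to a polynomial: the integrals against each
smooth compactly supported test function converge. -/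
def WeakTendsto {d : ℕ} (p : ℕ → MvPolynomial (Fin d) ℝ) (q : MvPolynomial (Fin d) ℝ) : Prop :=
  ∀ φ : (Fin d → ℝ) → ℝ, ContDiff ℝ ∞ φ → HasCompactSupport φ →
    Tendsto (fun m => ∫ x, eval x (p m) * φ x) atTop (𝓝 (∫ x, eval x q * φ x))

lemma differentiable_eval {d : ℕ} (p : MvPolynomial (Fin d) ℝ) :
    Differentiable ℝ (fun x : Fin d → ℝ => eval x p) :=
  differentiableOn_univ.1 (AnalyticOnNhd.eval_mvPolynomial p).differentiableOn

/-- The formal partial derivative computes the analytic one. -/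
lemma fderiv_eval_single {d : ℕ} (p : MvPolynomial (Fin d) ℝ) (i : Fin d) (x : Fin d → ℝ) :
    fderiv ℝ (fun x : Fin d → ℝ => eval x p) x (Pi.single i 1) = eval x (pderiv i p) := by
  induction p using MvPolynomial.induction_on with
  | C a => simp
  | add p q hp hq =>
    simp only [map_add]
    rw [fderiv_fun_add (differentiable_eval p x) (differentiable_eval q x)]
    simp [hp, hq]
  | mul_X p j hp =>
    have hX : HasFDerivAt (fun x : Fin d → ℝ => x j)
        (ContinuousLinearMap.proj (R := ℝ) (φ := fun _ : Fin d => ℝ) j) x :=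
      hasFDerivAt_apply j x
    simp only [map_mul, eval_X]
    rw [fderiv_fun_mul (differentiable_eval p x) hX.differentiableAt, hX.fderiv]
    simp only [add_apply, smul_apply, hp,
      ContinuousLinearMap.proj_apply, Derivation.leibniz, pderiv_X, smul_eq_mul, map_add,
      map_mul, eval_X]
    by_cases h : j = i
    · subst h; simp
    · simp [h]

lemma integrable_eval_mul {d : ℕ} (p : MvPolynomial (Fin d) ℝ) {φ : (Fin d → ℝ) → ℝ}
    (hφ : Continuous φ) (hc : HasCompactSupport φ) :
    Integrable (fun x => eval x p * φ x) :=
  ((continuous_eval p).mul hφ).integrable_of_hasCompactSupport hc.mul_left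

lemma integral_pderiv_mul {d : ℕ} (p : MvPolynomial (Fin d) ℝ) (i : Fin d)
    {φ : (Fin d → ℝ) → ℝ} (hφ : ContDiff ℝ ∞ φ) (hc : HasCompactSupport φ) :
    ∫ x, eval x (pderiv i p) * φ x = -∫ x, eval x p * fderiv ℝ φ x (Pi.single i 1) := by
  have h := integral_mul_fderiv_eq_neg_fderiv_mul_of_integrable (μ := volume)
    (f := fun x : Fin d → ℝ => eval x p) (g := φ) (v := Pi.single i 1)
    (by simpa only [fderiv_eval_single] using
      integrable_eval_mul (pderiv i p) hφ.continuous hc)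
    (integrable_eval_mul p
      ((hφ.continuous_fderiv (by simp)).clm_apply continuous_const) (hc.fderiv_apply ℝ _))
    (integrable_eval_mul p hφ.continuous hc)
    (fun x _ => differentiable_eval p x)
    (fun x _ => hφ.differentiable (by simp) x)
  simp only [fderiv_eval_single] at h
  rw [h, neg_neg]

namespace WeakTendsto

variable {d : ℕ} {p p' : ℕ → MvPolynomial (Fin d) ℝ} {q q' : MvPolynomial (Fin d) ℝ}

/-- Locally uniform convergence implies weak convergence, by dominated convergence: on the support
of `φ` the integrand is eventually bounded by `(|q| + 1) |φ|`. -/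
lemma of_tendstoUniformlyOn
    (hconv : ∀ K : Set (Fin d → ℝ), IsCompact K →
      TendstoUniformlyOn (fun m x => eval x (p m)) (fun x => eval x q) atTop K) :
    WeakTendsto p q := by
  intro φ hφ hc
  refine tendsto_integral_filter_of_dominated_convergence
    (fun x => (|eval x q| + 1) * |φ x|) (.of_forall fun m =>
      (integrable_eval_mul (p m) hφ.continuous hc).aestronglyMeasurable) ?_ ?_ ?_
  · filter_upwards [Metric.tendstoUniformlyOn_iff.1 (hconv _ hc) 1 one_pos] with m hm
    refine .of_forall fun x => ?_
    rw [norm_mul, Real.norm_eq_abs, Real.norm_eq_abs]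
    by_cases hx : x ∈ tsupport φ
    · gcongr
      have h := hm x hx
      rw [dist_comm, Real.dist_eq] at h
      linarith [abs_sub_abs_le_abs_sub (eval x (p m)) (eval x q)]
    · simp [image_eq_zero_of_notMem_tsupport hx]
  · exact Continuous.integrable_of_hasCompactSupport
      (((continuous_eval q).abs.add continuous_const).mul hφ.continuous.abs) hc.norm.mul_left
  · exact .of_forall fun x =>
      ((hconv {x} isCompact_singleton).tendsto_at rfl).mul tendsto_const_nhds

lemma add (h : WeakTendsto p q) (h' : WeakTendsto p' q') :
    WeakTendsto (fun m => p m + p' m) (q + q') := by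
  intro φ hφ hc
  have hi := fun r : MvPolynomial (Fin d) ℝ => integrable_eval_mul r hφ.continuous hc
  simpa only [map_add, add_mul, integral_add (hi _) (hi _)] using (h φ hφ hc).add (h' φ hφ hc)

lemma smul (h : WeakTendsto p q) (c : ℝ) : WeakTendsto (fun m => c • p m) (c • q) := by
  intro φ hφ hc
  simpa only [smul_eval, mul_assoc, integral_const_mul] using (h φ hφ hc).const_mul c

lemma sum {ι : Type*} (s : Finset ι) {p : ι → ℕ → MvPolynomial (Fin d) ℝ}
    {q : ι → MvPolynomial (Fin d) ℝ} (h : ∀ a ∈ s, WeakTendsto (p a) (q a)) :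
    WeakTendsto (fun m => ∑ a ∈ s, p a m) (∑ a ∈ s, q a) := by
  classical
  induction s using Finset.induction_on with
  | empty => intro φ _ _; simp
  | insert a s ha ih =>
    simp only [Finset.sum_insert ha]
    exact (h a (Finset.mem_insert_self a s)).add
      (ih fun b hb => h b (Finset.mem_insert_of_mem hb))

lemma pderiv (h : WeakTendsto p q) (i : Fin d) :
    WeakTendsto (fun m => pderiv i (p m)) (MvPolynomial.pderiv i q) := by
  intro φ hφ hc
  simp only [integral_pderiv_mul _ i hφ hc]
  exact (h _ ((hφ.fderiv_right (m := ∞) (by simp)).clm_apply contDiff_const)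
    (hc.fderiv_apply ℝ _)).neg

lemma pderiv_pow (h : WeakTendsto p q) (i : Fin d) (k : ℕ) :
    WeakTendsto
      (fun m => ((MvPolynomial.pderiv i : Derivation ℝ _ _).toLinearMap ^ k :
        Module.End ℝ (MvPolynomial (Fin d) ℝ)) (p m))
      (((MvPolynomial.pderiv i : Derivation ℝ _ _).toLinearMap ^ k :
        Module.End ℝ (MvPolynomial (Fin d) ℝ)) q) := by
  induction k with
  | zero => simpa using h
  | succ k ih => simpa [pow_succ'] using ih.pderiv i

lemma pderivPow (h : WeakTendsto p q) (α : Fin d →₀ ℕ) :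
    WeakTendsto (fun m => pderivPow d α (p m)) (_root_.pderivPow d α q) := by
  unfold _root_.pderivPow
  induction List.finRange d with
  | nil => simpa using h
  | cons i l ih => simpa using ih.pderiv_pow i (α i)

lemma diffOp (h : WeakTendsto p q) (P : MvPolynomial (Fin d) ℝ) :
    WeakTendsto (fun m => diffOp d P (p m)) (_root_.diffOp d P q) :=
  sum P.support fun α _ => (h.pderivPow α).smul (P.coeff α)

lemma eq_zero (h : WeakTendsto (fun _ => 0) q) : q = 0 := by
  have hae : ∀ᵐ x : Fin d → ℝ, eval x q = 0 := by
    refine ae_eq_zero_of_integral_contDiff_smul_eq_zero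
      (continuous_eval q).locallyIntegrable fun φ hφ hc => ?_
    have h0 := h φ hφ hc
    simp only [map_zero, zero_mul, integral_zero] at h0
    simpa only [smul_eq_mul, mul_comm] using tendsto_nhds_unique h0 tendsto_const_nhds
  have heq := Measure.eq_of_ae_eq hae (continuous_eval q) continuous_const
  exact MvPolynomial.funext fun x => by simpa using congrFun heq x

end WeakTendsto

/-- If a sequence of polynomials `p m` converges, uniformly on every compact
subset of `ℝ^d`, to (the function of) a polynomial `q`, and the constant-coefficient operator
`P(∂)` annihilates every `p m`, then `P(∂)` annihilates `q`. -/
theorem stmt_8 (d : ℕ) (p : ℕ → MvPolynomial (Fin d) ℝ) (q P : MvPolynomial (Fin d) ℝ)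
    (hconv : ∀ K : Set (Fin d → ℝ), IsCompact K →
      TendstoUniformlyOn (fun m x => MvPolynomial.eval x (p m))
        (fun x => MvPolynomial.eval x q) Filter.atTop K)
    (hann : ∀ m, diffOp d P (p m) = 0) :
    diffOp d P q = 0 := by
  have h := (WeakTendsto.of_tendstoUniformlyOn hconv).diffOp P
  simp only [hann] at h
  exact h.eq_zero
end

section
/- Let G be a finite group acting linearly on ℝⁿ and acting transitively on the finite index set {1,…,ℓ}. Let φ₁, …, φ_ℓ : ℝⁿ → ℝ^d be linear maps satisfying the equivariance compatibility φ_{g·k}(x) = φ_k(g⁻¹·x) for all g ∈ G, k ∈ {1,…,ℓ}, and x ∈ ℝⁿ. Suppose F : ℝⁿ → ℝ is G-invariant (F(g·x) = F(x) for all g, x) and F = Σ_{k=1}^ℓ f_k ∘ φ_k for continuous functions f₁, …, f_ℓ : ℝ^d → ℝ. Then, for any fixed index k₀, setting f̄ := |G|⁻¹ Σ_{g ∈ G} f_{g·k₀}, one has F = Σ_{k=1}^ℓ f̄ ∘ φ_k; that is, every G-invariant superposition can be written as a symmetric superposition with a single continuous function. -/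
/-! Apply the Reynolds operator to `F = ∑ k, f k ∘ φ k`. Invariance fixes the left side, while
compatibility gives `φ (g • j) (g • x) = φ j x`, so reindexing `k = g • j` turns the right side into
`∑ j, |G|⁻¹ ∑ g, f (g • j) (φ j x)`. Transitivity (`sum_orbit_eq`) makes the inner average
independent of `j`, hence equal to the one at `k₀`. -/

/-- By transitivity, averaging a family of functions over the orbit of `j` does not depend on `j`:
if `j = h • k₀`, the two sums differ by the substitution `g ↦ g * h`. -/
theorem sum_orbit_eq {ι G α M : Type*} [Group G] [Fintype G] [AddCommMonoid M]
    (a : G →* Equiv.Perm ι) (htrans : ∀ k k' : ι, ∃ g : G, a g k = k')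
    (f : ι → α → M) (j k₀ : ι) (y : α) :
    ∑ g : G, f (a g j) y = ∑ g : G, f (a g k₀) y := by
  obtain ⟨h, rfl⟩ := htrans k₀ j
  refine Fintype.sum_equiv (Equiv.mulRight h) _ _ fun g => ?_
  simp [map_mul]

/-- Let a finite group `G` act linearly on `ℝⁿ` (via `ρ`) and transitively on
the index set `{1, …, ℓ}` (via `a`). Let `φ₁, …, φ_ℓ : ℝⁿ → ℝ^d` be linear with
`φ_{g·k}(x) = φ_k (g⁻¹ · x)`. If `F : ℝⁿ → ℝ` is `G`-invariant and
`F = ∑ k, f_k ∘ φ_k` for continuous `f_k`, then for any fixed `k₀`, with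
`f̄ := |G|⁻¹ ∑_{g ∈ G} f_{g·k₀}`, one has `F = ∑ k, f̄ ∘ φ_k`. -/
theorem stmt_10 (n d ℓ : ℕ) (G : Type) [Group G] [Fintype G]
    (ρ : G →* ((Fin n → ℝ) ≃ₗ[ℝ] (Fin n → ℝ)))
    (a : G →* Equiv.Perm (Fin ℓ))
    (htrans : ∀ k k' : Fin ℓ, ∃ g : G, a g k = k')
    (φ : Fin ℓ → ((Fin n → ℝ) →ₗ[ℝ] (Fin d → ℝ)))
    (hcompat : ∀ (g : G) (k : Fin ℓ) (x : Fin n → ℝ), φ (a g k) x = φ k (ρ g⁻¹ x))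
    (F : (Fin n → ℝ) → ℝ)
    (hFinv : ∀ (g : G) (x : Fin n → ℝ), F (ρ g x) = F x)
    (f : Fin ℓ → ((Fin d → ℝ) → ℝ)) (hf : ∀ k, Continuous (f k))
    (hF : ∀ x, F x = ∑ k, f k (φ k x)) (k₀ : Fin ℓ) :
    ∀ x, F x = ∑ k, (Fintype.card G : ℝ)⁻¹ * ∑ g : G, f (a g k₀) (φ k x) := by
  intro x
  -- The superposition for `F (g • x)`, reindexed by `k = g • j`.
  have key : ∀ g : G, F x = ∑ j, f (a g j) (φ j x) := by
    intro g
    rw [← hFinv g x, hF, ← Equiv.sum_comp (a g)]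
    refine Finset.sum_congr rfl fun j _ => ?_
    rw [hcompat, ← LinearEquiv.mul_apply, ← map_mul, inv_mul_cancel, map_one,
      LinearEquiv.coe_one, id_eq]
  have hcard : (Fintype.card G : ℝ) ≠ 0 := Nat.cast_ne_zero.mpr Fintype.card_ne_zero
  have hsum : (Fintype.card G : ℝ) * F x = ∑ k, ∑ g : G, f (a g k₀) (φ k x) := by
    calc (Fintype.card G : ℝ) * F x = ∑ _g : G, F x := by simp
      _ = ∑ g : G, ∑ j, f (a g j) (φ j x) := Finset.sum_congr rfl fun g _ => key g
      _ = ∑ j, ∑ g : G, f (a g j) (φ j x) := Finset.sum_comm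
      _ = ∑ j, ∑ g : G, f (a g k₀) (φ j x) :=
        Finset.sum_congr rfl fun j _ => sum_orbit_eq a htrans f j k₀ (φ j x)
  rw [← Finset.mul_sum, ← hsum, inv_mul_cancel_left₀ hcard]
end

section
/- Let G be a finite group, H a normal subgroup of G, and K any subgroup of G. Then HK is a subgroup of G containing K, and pullback along the natural quotient map p : G/K → G/(HK) induces a linear injection ι : ℝ^{G/(HK)} → ℝ^{G/K}, ι(f) = f ∘ p, between the permutation representations. Precomposition with ι, T ↦ T ∘ ι, is a linear bijection from the space of G-equivariant linear maps ℝ^{G/K} → ℝ^{G/H} onto the space of G-equivariant linear maps ℝ^{G/(HK)} → ℝ^{G/H}. -/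
/-!
Normality of `H` makes `H` act trivially on `G ⧸ H` by left translation, so an equivariant `T` takes
the same value on `f` and on all its `H`-translates (`map_translate`), hence on the `H`-average of
`f` (`map_avg`). The `H`-orbits on `G ⧸ K` are exactly the fibres of
`p : G ⧸ K → G ⧸ (H ⊔ K)` (`exists_smul_eq`), so the average descends to an equivariant map
`avgDown : ℝ^{G/K} → ℝ^{G/(HK)}` with `avgDown ∘ ι = id` and `ι ∘ avgDown = avg`. Then
`T = (T ∘ ι) ∘ avgDown` for every equivariant `T`, which gives injectivity, and
`S = (S ∘ avgDown) ∘ ι` for every equivariant `S`, which gives surjectivity.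
-/

open Pointwise

/-- `G`-equivariance of a linear map `ℝ^{G/K} → ℝ^{G/H}` between permutation representations,
where `(g · f)(xK) = f(g⁻¹ x K)`. -/
def IsEquivariantMap {G : Type} [Group G] (K H : Subgroup G)
    (T : ((G ⧸ K) → ℝ) →ₗ[ℝ] ((G ⧸ H) → ℝ)) : Prop :=
  ∀ (g : G) (f : (G ⧸ K) → ℝ),
    T (fun x => f (g⁻¹ • x)) = fun y => T f (g⁻¹ • y)

namespace PermRep

variable {G : Type} [Group G] (H K : Subgroup G)

/-- The natural quotient map `G/K → G/(HK)`. -/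
def proj : G ⧸ K → G ⧸ (H ⊔ K) :=
  Subgroup.quotientMapOfLE le_sup_right

lemma proj_mk (g : G) : proj H K (g : G ⧸ K) = (g : G ⧸ (H ⊔ K)) := rfl

lemma proj_smul (g : G) (x : G ⧸ K) : proj H K (g • x) = g • proj H K x := by
  induction x using QuotientGroup.induction_on with
  | H a => rfl

/-- The section `G/(HK) → G/K` of `proj` given by chosen coset representatives. -/
noncomputable def sec (y : G ⧸ (H ⊔ K)) : G ⧸ K := (y.out : G)

lemma proj_sec (y : G ⧸ (H ⊔ K)) : proj H K (sec H K y) = y :=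
  QuotientGroup.out_eq' y

lemma proj_surjective : Function.Surjective (proj H K) :=
  fun y => ⟨sec H K y, proj_sec H K y⟩

lemma smul_mk_eq_self [H.Normal] (h : H) (y : G ⧸ H) : (h : G)⁻¹ • y = y := by
  induction y using QuotientGroup.induction_on with
  | H a =>
    change (((h : G)⁻¹ * a : G) : G ⧸ H) = (a : G ⧸ H)
    rw [QuotientGroup.eq]
    have := Subgroup.Normal.conj_mem ‹H.Normal› h h.2 a⁻¹
    simpa [mul_assoc] using this

/-- `H` acts on `G/K` preserving the fibres of `proj`. -/
lemma proj_smul_mem [H.Normal] (h : H) (x : G ⧸ K) :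
    proj H K ((h : G)⁻¹ • x) = proj H K x := by
  induction x using QuotientGroup.induction_on with
  | H a =>
    change (((h : G)⁻¹ * a : G) : G ⧸ (H ⊔ K)) = (a : G ⧸ (H ⊔ K))
    rw [QuotientGroup.eq]
    have := Subgroup.Normal.conj_mem ‹H.Normal› h h.2 a⁻¹
    exact (le_sup_left : H ≤ H ⊔ K) (by simpa [mul_assoc] using this)

/-- `H` acts transitively on each fibre of `proj`, because `a * h * k` and `(a * h * a⁻¹) * a` lie
in the same left coset of `K`. -/
lemma exists_smul_eq [H.Normal] (x x' : G ⧸ K) (hx : proj H K x = proj H K x') :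
    ∃ h : H, x' = (h : G) • x := by
  induction x using QuotientGroup.induction_on with
  | H a =>
  induction x' using QuotientGroup.induction_on with
  | H b =>
    rw [proj_mk, proj_mk, QuotientGroup.eq, Subgroup.mem_sup_of_normal_left] at hx
    obtain ⟨h, hh, k, hk, e⟩ := hx
    refine ⟨⟨a * h * a⁻¹, Subgroup.Normal.conj_mem ‹H.Normal› h hh a⟩, ?_⟩
    change (b : G ⧸ K) = ((a * h * a⁻¹ * a : G) : G ⧸ K)
    have hb : b = a * h * k := by rw [mul_assoc, e]; group
    rw [QuotientGroup.eq, hb]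
    simpa [mul_assoc] using K.inv_mem hk

lemma map_translate [H.Normal] {T : ((G ⧸ K) → ℝ) →ₗ[ℝ] ((G ⧸ H) → ℝ)}
    (hT : IsEquivariantMap K H T) (h : H) (f : (G ⧸ K) → ℝ) :
    T (fun x => f ((h : G)⁻¹ • x)) = T f := by
  rw [hT]
  funext y
  rw [smul_mk_eq_self]

variable [Fintype G]

open Classical in
/-- The average of a function on `G/K` over its translates by elements of `H`. -/
noncomputable def avg : ((G ⧸ K) → ℝ) →ₗ[ℝ] ((G ⧸ K) → ℝ) :=
  (Fintype.card H : ℝ)⁻¹ • ∑ h : H, LinearMap.funLeft ℝ ℝ (fun x : G ⧸ K => (h : G)⁻¹ • x)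

open Classical in
lemma avg_apply (f : (G ⧸ K) → ℝ) (x : G ⧸ K) :
    avg H K f x = (Fintype.card H : ℝ)⁻¹ * ∑ h : H, f ((h : G)⁻¹ • x) := by
  simp [avg, LinearMap.funLeft_apply]

open Classical in
lemma avg_smul_mem (f : (G ⧸ K) → ℝ) (h : H) (x : G ⧸ K) :
    avg H K f ((h : G) • x) = avg H K f x := by
  rw [avg_apply, avg_apply]
  congr 1
  refine Fintype.sum_equiv (Equiv.mulLeft h⁻¹) _ _ fun h' => ?_
  simp [mul_smul]

open Classical in
lemma avg_translate [H.Normal] (g : G) (f : (G ⧸ K) → ℝ) (x : G ⧸ K) :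
    avg H K (fun x => f (g⁻¹ • x)) x = avg H K f (g⁻¹ • x) := by
  rw [avg_apply, avg_apply]
  congr 1
  -- Conjugation by `g⁻¹` permutes `H`, since `H` is normal.
  refine Fintype.sum_equiv (MulAut.conjNormal g⁻¹).toEquiv _ _ fun h => ?_
  simp [← mul_smul, mul_assoc]

lemma avg_eq_of_proj_eq [H.Normal] (f : (G ⧸ K) → ℝ) (x x' : G ⧸ K)
    (hx : proj H K x = proj H K x') : avg H K f x = avg H K f x' := by
  obtain ⟨h, rfl⟩ := exists_smul_eq H K x x' hx
  rw [avg_smul_mem]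

/-- The `H`-average, regarded as a function on `G/(HK)`. For normal `H` the average is constant on
the fibres of `proj`, so the choice of section does not matter. -/
noncomputable def avgDown : ((G ⧸ K) → ℝ) →ₗ[ℝ] ((G ⧸ (H ⊔ K)) → ℝ) :=
  LinearMap.funLeft ℝ ℝ (sec H K) ∘ₗ avg H K

lemma avgDown_apply (f : (G ⧸ K) → ℝ) (y : G ⧸ (H ⊔ K)) :
    avgDown H K f y = avg H K f (sec H K y) := rfl

lemma funLeft_avgDown [H.Normal] (f : (G ⧸ K) → ℝ) :
    LinearMap.funLeft ℝ ℝ (proj H K) (avgDown H K f) = avg H K f := by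
  funext x
  exact avg_eq_of_proj_eq H K f _ _ (proj_sec H K _)

lemma avgDown_funLeft [H.Normal] (f : (G ⧸ (H ⊔ K)) → ℝ) :
    avgDown H K (LinearMap.funLeft ℝ ℝ (proj H K) f) = f := by
  classical
  funext y
  rw [avgDown_apply, avg_apply]
  simp only [LinearMap.funLeft_apply, proj_smul_mem, proj_sec]
  simp

lemma avgDown_translate [H.Normal] (g : G) (f : (G ⧸ K) → ℝ) :
    avgDown H K (fun x => f (g⁻¹ • x)) = fun y => avgDown H K f (g⁻¹ • y) := by
  funext y
  rw [avgDown_apply, avgDown_apply, avg_translate]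
  apply avg_eq_of_proj_eq
  rw [proj_smul, proj_sec, proj_sec]

lemma map_avg [H.Normal] {T : ((G ⧸ K) → ℝ) →ₗ[ℝ] ((G ⧸ H) → ℝ)}
    (hT : IsEquivariantMap K H T) (f : (G ⧸ K) → ℝ) : T (avg H K f) = T f := by
  classical
  have key : ∀ h : H, T (LinearMap.funLeft ℝ ℝ (fun x : G ⧸ K => (h : G)⁻¹ • x) f) = T f :=
    fun h => map_translate H K hT h f
  have hc : (Fintype.card H : ℝ) ≠ 0 := Nat.cast_ne_zero.mpr Fintype.card_ne_zero
  simp only [avg, LinearMap.smul_apply, LinearMap.sum_apply, map_smul, map_sum, key,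
    Finset.sum_const, Finset.card_univ]
  rw [← Nat.cast_smul_eq_nsmul ℝ, smul_smul, inv_mul_cancel₀ hc, one_smul]

end PermRep

/-- Let `G` be a finite group, `H ⊴ G` normal, `K ≤ G` any subgroup. Then
`HK` is a subgroup of `G` (namely `H ⊔ K`, whose underlying set is `H * K`) containing `K`, and
pullback along the natural quotient map `p : G/K → G/(HK)` gives a linear injection
`ι : ℝ^{G/(HK)} → ℝ^{G/K}`, `ι f = f ∘ p`. Precomposition `T ↦ T ∘ ι` maps `G`-equivariant
linear maps `ℝ^{G/K} → ℝ^{G/H}` to `G`-equivariant linear maps `ℝ^{G/(HK)} → ℝ^{G/H}`,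
injectively and surjectively. -/
theorem stmt_11 (G : Type) [Group G] [Fintype G] (H K : Subgroup G) [H.Normal] :
    ((H : Set G) * (K : Set G) = ((H ⊔ K : Subgroup G) : Set G)) ∧
    K ≤ H ⊔ K ∧
    ∃ p : G ⧸ K → G ⧸ (H ⊔ K),
      (∀ g : G, p ((g : G) : G ⧸ K) = ((g : G) : G ⧸ (H ⊔ K))) ∧
      Function.Injective (LinearMap.funLeft ℝ ℝ p) ∧
      (∀ T : ((G ⧸ K) → ℝ) →ₗ[ℝ] ((G ⧸ H) → ℝ), IsEquivariantMap K H T →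
        IsEquivariantMap (H ⊔ K) H (T ∘ₗ LinearMap.funLeft ℝ ℝ p)) ∧
      Function.Injective
        (fun T : {T : ((G ⧸ K) → ℝ) →ₗ[ℝ] ((G ⧸ H) → ℝ) // IsEquivariantMap K H T} =>
          T.1 ∘ₗ LinearMap.funLeft ℝ ℝ p) ∧
      (∀ S : ((G ⧸ (H ⊔ K)) → ℝ) →ₗ[ℝ] ((G ⧸ H) → ℝ), IsEquivariantMap (H ⊔ K) H S →
        ∃ T : ((G ⧸ K) → ℝ) →ₗ[ℝ] ((G ⧸ H) → ℝ), IsEquivariantMap K H T ∧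
          S = T ∘ₗ LinearMap.funLeft ℝ ℝ p) := by
  refine ⟨(Subgroup.normal_mul H K).symm, le_sup_right, PermRep.proj H K, PermRep.proj_mk H K,
    LinearMap.funLeft_injective_of_surjective ℝ ℝ _ (PermRep.proj_surjective H K), ?_, ?_, ?_⟩
  · intro T hT g f
    have h := hT g (LinearMap.funLeft ℝ ℝ (PermRep.proj H K) f)
    simpa only [LinearMap.comp_apply, LinearMap.funLeft, LinearMap.coe_mk, AddHom.coe_mk,
      Function.comp_def, PermRep.proj_smul] using h
  · rintro ⟨T, hT⟩ ⟨T', hT'⟩ h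
    apply Subtype.ext
    apply LinearMap.ext
    intro f
    change T f = T' f
    rw [← PermRep.map_avg H K hT, ← PermRep.map_avg H K hT', ← PermRep.funLeft_avgDown]
    exact LinearMap.congr_fun h (PermRep.avgDown H K f)
  · intro S hS
    refine ⟨S ∘ₗ PermRep.avgDown H K, fun g f => ?_, ?_⟩
    · rw [LinearMap.comp_apply, PermRep.avgDown_translate, hS]
      rfl
    · apply LinearMap.ext
      intro f
      rw [LinearMap.comp_apply, LinearMap.comp_apply, PermRep.avgDown_funLeft]
end

section
/- A linear map A : ℝⁿ → ℝⁿ commutes with the standard permutation action of the symmetric group Sₙ (i.e., A(σ·v) = σ·A(v) for every permutation σ of coordinates and every v ∈ ℝⁿ) if and only if there exist real numbers a, b such that A = a·id + b·𝟙𝟙ᵀ, where 𝟙𝟙ᵀ is the linear map sending v to (Σ_{j=1}^n v_j)·(1,…,1). -/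
/-!
In the standard basis, equivariance of `A` says that its matrix satisfies
`M (σ i) (σ j) = M i j` for all `σ`. Since `Sₙ` acts transitively on points and on ordered pairs
of distinct points, `M` takes one value `d` on the diagonal and one value `b` off it, so that
`A = (d - b) • id + b • 𝟙𝟙ᵀ`. The converse is the invariance of `∑ j, v j` under reindexing.
-/

/-- The symmetric group acts transitively on ordered pairs of distinct points. -/
lemma exists_perm_map_pair {α : Type*} [DecidableEq α] {i j p q : α} (hij : i ≠ j) (hpq : p ≠ q) :
    ∃ σ : Equiv.Perm α, σ i = p ∧ σ j = q := by
  refine ⟨Equiv.swap (Equiv.swap i p j) q * Equiv.swap i p, ?_, ?_⟩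
  · have h : p ≠ Equiv.swap i p j := fun h => hij <| (Equiv.swap i p).injective (by simpa using h)
    simp [Equiv.swap_apply_of_ne_of_ne h hpq]
  · simp

/-- A linear map `A : ℝⁿ → ℝⁿ` commutes with the standard permutation action
of `Sₙ` (where `(σ · v) i = v (σ⁻¹ i)`) if and only if `A = a • id + b • 𝟙𝟙ᵀ` for some reals
`a, b`, i.e. `(A v) i = a * v i + b * ∑ j, v j` for all `v` and `i`. -/
theorem stmt_13 (n : ℕ) (A : (Fin n → ℝ) →ₗ[ℝ] (Fin n → ℝ)) :
    (∀ (σ : Equiv.Perm (Fin n)) (v : Fin n → ℝ),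
        A (fun i => v (σ⁻¹ i)) = fun i => A v (σ⁻¹ i)) ↔
      ∃ a b : ℝ, ∀ (v : Fin n → ℝ) (i : Fin n), A v i = a * v i + b * ∑ j, v j := by
  constructor
  · intro h
    have hM : ∀ (σ : Equiv.Perm (Fin n)) (i j : Fin n),
        A (Pi.single (σ j) 1) (σ i) = A (Pi.single j 1) i := by
      intro σ i j
      have hs : (fun k => (Pi.single j 1 : Fin n → ℝ) (σ⁻¹ k)) = Pi.single (σ j) 1 := by
        ext k
        simp only [Pi.single_apply, Equiv.Perm.inv_eq_iff_eq]
      have := congrFun (h σ (Pi.single j 1)) (σ i)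
      rw [hs] at this
      simpa using this
    have hdiag : ∃ d : ℝ, ∀ i, A (Pi.single i 1) i = d := by
      rcases isEmpty_or_nonempty (Fin n) with hn | ⟨⟨p⟩⟩
      · exact ⟨0, fun i => hn.elim i⟩
      · refine ⟨A (Pi.single p 1) p, fun i => ?_⟩
        simpa using hM (Equiv.swap p i) p p
    have hoff : ∃ b : ℝ, ∀ i j, i ≠ j → A (Pi.single j 1) i = b := by
      by_cases hn : ∃ p q : Fin n, p ≠ q
      · obtain ⟨p, q, hpq⟩ := hn
        refine ⟨A (Pi.single q 1) p, fun i j hij => ?_⟩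
        obtain ⟨σ, rfl, rfl⟩ := exists_perm_map_pair hij hpq
        exact (hM σ i j).symm
      · exact ⟨0, fun i j hij => (hn ⟨i, j, hij⟩).elim⟩
    obtain ⟨d, hd⟩ := hdiag
    obtain ⟨b, hb⟩ := hoff
    refine ⟨d - b, b, fun v i => ?_⟩
    have hentry : ∀ j, A (Pi.single j 1) i = (if i = j then d - b else 0) + b := by
      intro j
      split_ifs with hij
      · subst hij
        simp [hd]
      · simp [hb i j hij]
    rw [A.pi_apply_eq_sum_univ v]
    have hs : ∀ j : Fin n, (fun k => if j = k then (1 : ℝ) else 0) = Pi.single j 1 := by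
      intro j
      ext k
      simp [Pi.single_apply, eq_comm]
    simp only [hs, Finset.sum_apply, Pi.smul_apply, smul_eq_mul, hentry, mul_add,
      Finset.sum_add_distrib, ← Finset.sum_mul, mul_ite, mul_zero, Finset.sum_ite_eq,
      Finset.mem_univ, if_true]
    ring
  · rintro ⟨a, b, h⟩ σ v
    ext i
    simp only [h]
    rw [Equiv.sum_comp σ⁻¹ v]
end

section
/- Let n > 3 and work in the polynomial ring ℝ[x₁,…,xₙ]. Define direction vectors c₁ = e₂ − eₙ, c₂ = e₃ − eₙ, …, c_{n−3} = e_{n−2} − eₙ, c_{n−2} = e_{n−1} − eₙ, c_{n−1} = eₙ − e₂, cₙ = e₁ − e₂, where e₁,…,eₙ is the standard basis of ℝⁿ. Then applying the composition of directional derivative operators D_{cₙ} ∘ D_{c_{n−1}} ∘ ⋯ ∘ D_{c₁} to the monomial x₁x₂⋯xₙ yields the constant polynomial 2; in particular the result is nonzero. -/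
/-!
The idea is to follow the polynomial through the successive derivations, with zero-based indices.
After the first `k ≤ n - 2` operators `∂_{j+1} - ∂_{n-1}`, `j < k`, the monomial has become
`x₀ · (∏_{k < j < n-1} x_j) · (x_{n-1} - ∑_{1 ≤ i ≤ k} x_i)` (`applyFirst_eq`): writing this as
`x₀ · x_{k+1} · Q · (x_{n-1} - S)` with `Q` killed by the next operator, `∂_{k+1}` removes `x_{k+1}`
and `-∂_{n-1}` replaces the last factor by `-1`, so `x_{k+1}` moves into the sum `S`.
At `k = n - 2` what is left is `x₀ (x_{n-1} - x_1 - ⋯ - x_{n-2})`, which `∂_{n-1} - ∂_1` maps to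
`2 x₀`, and `∂_0 - ∂_1` maps that to `2`.
-/

open MvPolynomial

/-- The directional derivative operator `D_c = c₁ ∂₁ + ⋯ + cₙ ∂ₙ` on `ℝ[x₁, …, xₙ]`. -/
noncomputable def dirD (n : ℕ) (c : Fin n → ℝ) :
    Module.End ℝ (MvPolynomial (Fin n) ℝ) :=
  ∑ i, c i • ((pderiv i : Derivation ℝ _ _).toLinearMap)

/-- The direction vectors of the paper (in one-based notation):
`c_α = e_{α+1} - e_n` for `α = 1, …, n-2`, `c_{n-1} = e_n - e_2`, `c_n = e_1 - e_2`.
Here indices are zero-based: `i : Fin n` corresponds to `α = i + 1`. -/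
noncomputable def dirVec (n : ℕ) (hn : 3 < n) (i : Fin n) : Fin n → ℝ :=
  if h1 : (i : ℕ) + 2 ≤ n - 1 then
    Pi.single (⟨(i : ℕ) + 1, by omega⟩ : Fin n) 1 - Pi.single (⟨n - 1, by omega⟩ : Fin n) 1
  else if h2 : (i : ℕ) = n - 2 then
    Pi.single (⟨n - 1, by omega⟩ : Fin n) 1 - Pi.single (⟨1, by omega⟩ : Fin n) 1
  else
    Pi.single (⟨0, by omega⟩ : Fin n) 1 - Pi.single (⟨1, by omega⟩ : Fin n) 1

lemma dirD_mul (n : ℕ) (c : Fin n → ℝ) (p q : MvPolynomial (Fin n) ℝ) :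
    dirD n c (p * q) = p * dirD n c q + q * dirD n c p := by
  simp only [dirD, LinearMap.sum_apply, LinearMap.smul_apply, Derivation.coeFn_coe, Derivation.leibniz, smul_eq_mul, Finset.mul_sum, smul_add,
    Finset.sum_add_distrib, mul_smul_comm]

lemma dirD_X (n : ℕ) (c : Fin n → ℝ) (j : Fin n) :
    dirD n c (X j) = C (c j) := by
  simp [dirD, pderiv_X, Pi.single_apply, MvPolynomial.smul_eq_C_mul]

lemma dirD_one (n : ℕ) (c : Fin n → ℝ) : dirD n c 1 = 0 := by
  simp [dirD]

/-- The variable `x_j` indexed by a natural number, with the value `0` when `j ≥ n`. -/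
noncomputable def natVar (n j : ℕ) : MvPolynomial (Fin n) ℝ :=
  if h : j < n then X ⟨j, h⟩ else 0

lemma dirD_natVar (n : ℕ) (c : Fin n → ℝ) (j : ℕ) (h : j < n) :
    dirD n c (natVar n j) = C (c ⟨j, h⟩) := by
  rw [natVar, dif_pos h, dirD_X]

lemma dirD_natVar_low (n : ℕ) (hn : 3 < n) (k j : ℕ) (hk : k + 2 < n) (h : j < n) :
    dirD n (dirVec n hn ⟨k, by omega⟩) (natVar n j) =
      (if j = k + 1 then 1 else 0) - (if j = n - 1 then 1 else 0) := by
  have h1 : k + 2 ≤ n - 1 := by omega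
  rw [dirD_natVar n _ j h]
  simp only [dirVec, h1, dif_pos, Pi.sub_apply, Pi.single_apply, Fin.mk.injEq]
  split_ifs <;> simp

lemma dirD_natVar_penultimate (n : ℕ) (hn : 3 < n) (j : ℕ) (h : j < n) :
    dirD n (dirVec n hn ⟨n - 2, by omega⟩) (natVar n j) =
      (if j = n - 1 then 1 else 0) - (if j = 1 then 1 else 0) := by
  have h1 : ¬ (n - 2 + 2 ≤ n - 1) := by omega
  rw [dirD_natVar n _ j h]
  simp only [dirVec, h1, dif_neg, not_false_eq_true, dite_true, Pi.sub_apply, Pi.single_apply,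
    Fin.mk.injEq]
  split_ifs <;> simp

lemma dirD_natVar_last (n : ℕ) (hn : 3 < n) (j : ℕ) (h : j < n) :
    dirD n (dirVec n hn ⟨n - 1, by omega⟩) (natVar n j) =
      (if j = 0 then 1 else 0) - (if j = 1 then 1 else 0) := by
  have h1 : ¬ (n - 1 + 2 ≤ n - 1) := by omega
  have h2 : ¬ (n - 1 = n - 2) := by omega
  rw [dirD_natVar n _ j h]
  simp only [dirVec, h1, h2, dif_neg, not_false_eq_true, Pi.sub_apply, Pi.single_apply,
    Fin.mk.injEq]
  split_ifs <;> simp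

lemma dirD_prod_eq_zero (n : ℕ) (c : Fin n → ℝ) (s : Finset ℕ)
    (h : ∀ j ∈ s, dirD n c (natVar n j) = 0) : dirD n c (∏ j ∈ s, natVar n j) = 0 :=
  Finset.prod_induction _ (fun p => dirD n c p = 0)
    (fun p q hp hq => by rw [dirD_mul, hp, hq]; simp) (dirD_one n c) h

/-- The polynomial obtained from `x₀ ⋯ x_{n-1}` by the first `k` operators. -/
noncomputable def applyFirst (n : ℕ) (hn : 3 < n) (k : ℕ) : MvPolynomial (Fin n) ℝ :=
  (((List.finRange n).take k).reverse.map fun i => dirD n (dirVec n hn i)).prod (∏ i, X i)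

lemma applyFirst_succ (n : ℕ) (hn : 3 < n) (k : ℕ) (hk : k < n) :
    applyFirst n hn (k + 1) = dirD n (dirVec n hn ⟨k, hk⟩) (applyFirst n hn k) := by
  have : (List.finRange n).take (k + 1) = (List.finRange n).take k ++ [⟨k, hk⟩] := by
    rw [List.take_succ_eq_append_getElem (by simpa using hk)]
    simp
  simp only [applyFirst, this, List.reverse_append, List.reverse_singleton, List.map_append,
    List.map_singleton, List.singleton_append, List.map_cons, List.prod_cons, Module.End.mul_apply]

lemma applyFirst_eq (n : ℕ) (hn : 3 < n) (k : ℕ) (hk : k + 2 ≤ n) :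
    applyFirst n hn k = natVar n 0 * ((∏ j ∈ Finset.Ico (k + 1) (n - 1), natVar n j) *
      (natVar n (n - 1) - ∑ i ∈ Finset.Ico 1 (k + 1), natVar n i)) := by
  induction k with
  | zero =>
    have h : ∏ i : Fin n, (X i : MvPolynomial (Fin n) ℝ) = ∏ j ∈ Finset.range n, natVar n j := by
      rw [← Fin.prod_univ_eq_prod_range]
      exact Finset.prod_congr rfl fun i _ => by simp [natVar]
    obtain ⟨m, rfl⟩ : ∃ m, n = m + 1 := ⟨n - 1, by omega⟩
    simp only [applyFirst, List.take_zero, List.reverse_nil, List.map_nil, List.prod_nil,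
      Module.End.one_apply, h]
    rw [Finset.prod_range_succ, Finset.range_eq_Ico, Finset.prod_eq_prod_Ico_succ_bot (by omega)]
    simp [mul_assoc]
  | succ k ih =>
    rw [applyFirst_succ n hn k (by omega), ih (by omega),
      Finset.prod_eq_prod_Ico_succ_bot (a := k + 1) (by omega),
      Finset.sum_Ico_succ_top (a := 1) (b := k + 1) (by omega)]
    have hD := dirD_natVar_low n hn k
    have hQ : dirD n (dirVec n hn ⟨k, by omega⟩)
        (∏ j ∈ Finset.Ico (k + 1 + 1) (n - 1), natVar n j) = 0 := by
      refine dirD_prod_eq_zero _ _ _ fun j hj => ?_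
      rw [Finset.mem_Ico] at hj
      rw [hD j (by omega) (by omega), if_neg (by omega), if_neg (by omega), sub_zero]
    have hS : dirD n (dirVec n hn ⟨k, by omega⟩) (∑ i ∈ Finset.Ico 1 (k + 1), natVar n i) = 0 := by
      rw [map_sum]
      refine Finset.sum_eq_zero fun j hj => ?_
      rw [Finset.mem_Ico] at hj
      rw [hD j (by omega) (by omega), if_neg (by omega), if_neg (by omega), sub_zero]
    have h0 := hD 0 (by omega) (by omega)
    have h1 := hD (k + 1) (by omega) (by omega)
    have h2 := hD (n - 1) (by omega) (by omega)
    rw [if_neg (by omega), if_neg (by omega)] at h0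
    rw [if_pos rfl, if_neg (by omega)] at h1
    rw [if_neg (by omega), if_pos rfl] at h2
    simp only [dirD_mul, map_sub, hQ, hS, h0, h1, h2]
    ring

/-- For `n > 3`, applying `D_{cₙ} ∘ D_{c_{n-1}} ∘ ⋯ ∘ D_{c₁}` to the monomial
`x₁ x₂ ⋯ xₙ` yields the constant polynomial `2`; in particular the result is nonzero. -/
theorem stmt_16 (n : ℕ) (hn : 3 < n) :
    (((List.finRange n).reverse.map fun i => dirD n (dirVec n hn i)).prod
        (∏ i, (X i : MvPolynomial (Fin n) ℝ)) = MvPolynomial.C 2) ∧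
    ((List.finRange n).reverse.map fun i => dirD n (dirVec n hn i)).prod
        (∏ i, (X i : MvPolynomial (Fin n) ℝ)) ≠ 0 := by
  have key : ((List.finRange n).reverse.map fun i => dirD n (dirVec n hn i)).prod
      (∏ i, (X i : MvPolynomial (Fin n) ℝ)) = MvPolynomial.C 2 := by
    have hfull : ((List.finRange n).reverse.map fun i => dirD n (dirVec n hn i)).prod
        (∏ i, (X i : MvPolynomial (Fin n) ℝ)) = applyFirst n hn (n - 2 + 1 + 1) := by
      rw [applyFirst, List.take_of_length_le (by simp; omega)]
    have hlast : (⟨n - 2 + 1, by omega⟩ : Fin n) = ⟨n - 1, by omega⟩ := by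
      ext
      simp only
      omega
    have hD := dirD_natVar_penultimate n hn
    have h0 := hD 0 (by omega)
    have h1 := hD 1 (by omega)
    have h2 := hD (n - 1) (by omega)
    rw [if_neg (by omega), if_neg (by omega)] at h0
    rw [if_neg (by omega), if_pos rfl] at h1
    rw [if_pos rfl, if_neg (by omega)] at h2
    -- Among `x_1, …, x_{n-2}` the operator `∂_{n-1} - ∂_1` sees only `x_1`.
    have hS : dirD n (dirVec n hn ⟨n - 2, by omega⟩)
        (∑ i ∈ Finset.Ico 1 (n - 2 + 1), natVar n i) = -1 := by
      rw [map_sum, Finset.sum_eq_single_of_mem 1 (Finset.mem_Ico.2 (by omega)), h1, zero_sub]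
      intro j hj hj1
      rw [Finset.mem_Ico] at hj
      rw [hD j (by omega), if_neg (by omega), if_neg hj1, sub_zero]
    have hpen : applyFirst n hn (n - 2 + 1) = natVar n 0 + natVar n 0 := by
      rw [applyFirst_succ n hn (n - 2) (by omega), applyFirst_eq n hn (n - 2) (by omega),
        Finset.Ico_eq_empty (a := n - 2 + 1) (b := n - 1) (by omega), Finset.prod_empty, one_mul,
        dirD_mul, map_sub, hS, h0, h2]
      ring
    rw [hfull, applyFirst_succ n hn (n - 2 + 1) (by omega), hpen, hlast, map_add,
      dirD_natVar_last n hn 0 (by omega), if_pos rfl, if_neg (by omega), sub_zero, ← C_1, ← C_add]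
    norm_num
  refine ⟨key, ?_⟩
  rw [key, Ne, C_eq_zero]
  norm_num
end

section
/- Let σ : ℝ → ℝ be a continuous function that is not a polynomial, and let n ≥ 1. Then the closure, in the topology of uniform convergence on compact sets, of the set of all functions ℝⁿ → ℝ of the form x ↦ Σ_{j=1}^h a_j Σ_{i=1}^n σ(b_j x_i + c_j (Σ_{k=1}^n x_k) + d_j), ranging over all widths h ∈ ℕ and all real parameters a_j, b_j, c_j, d_j, equals the closure of the set {x ↦ Σ_{i=1}^n f(x_i, Σ_{k=1}^n x_k) : f ∈ C(ℝ²)}. -/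
/-!
Let `N` be the span of the ridge functions `(s, t) ↦ σ (b s + c t + d)` in `C(ℝ², ℝ)`, and let
`T f = (x ↦ ∑ i, f (x i, ∑ k, x k))`, a continuous linear map `C(ℝ², ℝ) → C(ℝⁿ, ℝ)`. The two
families are the image of `N` under `T` and the range of `T`, so it suffices that `N` is dense, which is the
universal approximation theorem of Leshno, Lin, Pinkus and Schocken (`dense_ridge`).

For the density, fix a compact `K ⊆ ℝ²`, let `M` be the closure in `C(K, ℝ)` of the restrictions of
`N`, and let `u = b s + c t`, so that `σ (r u + d) ∈ M` for all real `r, d`.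

* `mem_convolution`: the same holds with `σ` replaced by `τ = φ * σ`, where `φ` is a test function,
  since the convolution is an `M`-valued integral.
* `mem_mul_iteratedDeriv`: differentiating `k` times in `r` gives `u ^ k * τ⁽ᵏ⁾ (r u + d) ∈ M`.
  At `r = 0` this shows `u ^ k ∈ M` as soon as `τ⁽ᵏ⁾` is not identically zero.
* `pow_mem_of_not_polynomial`: for each `k` some mollification has `τ⁽ᵏ⁾ ≠ 0`. Otherwise all
  of them are polynomials of degree `< k`, and so is their pointwise limit `σ`, because a
  finite-dimensional subspace of `ℝ → ℝ` is closed.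
* `exp_mem_of_pow_mem`: hence `exp u ∈ M`.

The functions `exp (b s + c t)` span a subalgebra of `C(ℝ², ℝ)` that separates points, and
Stone–Weierstrass concludes.
-/
open Filter Topology MeasureTheory
open scoped ContDiff

/-- If a closed subspace `M` contains `g * τ (r u + d)` for all `r, d`, then it contains the
derivatives `g * u * τ' (r u + d)` in `r`. Differentiability for the sup norm comes from writing
`r ↦ g * τ (r u + d)` as the primitive of a continuous `C(K, ℝ)`-valued function. -/
theorem mem_mul_deriv {K : Type*} [TopologicalSpace K] [CompactSpace K]
    (M : Submodule ℝ C(K, ℝ)) (hM : IsClosed (M : Set C(K, ℝ))) (u g : C(K, ℝ))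
    (τ : ℝ → ℝ) (hτ : ContDiff ℝ 1 τ)
    (h : ∀ r d : ℝ, ∃ m ∈ M, ∀ x, m x = g x * τ (r * u x + d)) (r d : ℝ) :
    ∃ m ∈ M, ∀ x, m x = (g * u) x * deriv τ (r * u x + d) := by
  have hτc : Continuous τ := hτ.continuous
  have hτ'c : Continuous (deriv τ) := hτ.continuous_deriv le_rfl
  have hc : Continuous fun p : ℝ × K ↦ (g * u) p.2 * deriv τ (p.1 * u p.2 + d) := by fun_prop
  let G : C(ℝ, C(K, ℝ)) := ContinuousMap.curry ⟨_, hc⟩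
  have hG : ∀ ρ x, G ρ x = (g * u) x * deriv τ (ρ * u x + d) := fun _ _ ↦ rfl
  choose F hFM hF using fun ρ ↦ h ρ d
  have hFG : ∀ ρ, F ρ = F 0 + ∫ s in (0 : ℝ)..ρ, G s := by
    intro ρ
    refine ContinuousMap.ext fun x ↦ ?_
    have h1 : (∫ s in (0 : ℝ)..ρ, G s) x = ∫ s in (0 : ℝ)..ρ, G s x :=
      ((ContinuousMap.evalCLM ℝ x).intervalIntegral_comp_comm
        (G.continuous.intervalIntegrable 0 ρ)).symm
    have h2 : ∫ s in (0 : ℝ)..ρ, G s x = F ρ x - F 0 x := by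
      simp only [hF, hG]
      apply intervalIntegral.integral_eq_sub_of_hasDerivAt
        (f := fun s ↦ g x * τ (s * u x + d))
      · intro s _
        have h3 : HasDerivAt (fun s : ℝ ↦ s * u x + d) (u x) s := by
          simpa using ((hasDerivAt_id s).mul_const (u x)).add_const d
        have h4 := (hτ.differentiable one_ne_zero (s * u x + d)).hasDerivAt.comp s h3
        refine (h4.const_mul (g x)).congr_deriv ?_
        rw [ContinuousMap.mul_apply]; ring
      · exact Continuous.intervalIntegrable (by fun_prop) _ _
    rw [ContinuousMap.add_apply, h1, h2]; ring
  have hd : HasDerivAt F (G r) r := by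
    rw [funext hFG]
    exact (intervalIntegral.integral_hasDerivAt_right (G.continuous.intervalIntegrable 0 r)
      G.continuous.aestronglyMeasurable.stronglyMeasurableAtFilter
      G.continuous.continuousAt).const_add _
  refine ⟨G r, hM.mem_of_tendsto (hasDerivAt_iff_tendsto_slope.1 hd) (.of_forall fun s ↦ ?_),
    hG r⟩
  exact M.smul_mem _ (M.sub_mem (hFM s) (hFM r))

theorem mem_mul_iteratedDeriv {K : Type*} [TopologicalSpace K] [CompactSpace K]
    (M : Submodule ℝ C(K, ℝ)) (hM : IsClosed (M : Set C(K, ℝ))) (u : C(K, ℝ)) (k : ℕ) :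
    ∀ (g : C(K, ℝ)) (τ : ℝ → ℝ), ContDiff ℝ ∞ τ →
    (∀ r d : ℝ, ∃ m ∈ M, ∀ x, m x = g x * τ (r * u x + d)) →
    ∀ r d : ℝ, ∃ m ∈ M, ∀ x, m x = (g * u ^ k) x * iteratedDeriv k τ (r * u x + d) := by
  induction k with
  | zero => intro g τ _ h r d; simpa using h r d
  | succ k ih =>
    intro g τ hτ h r d
    have := ih (g * u) (deriv τ) (contDiff_infty_iff_deriv.1 hτ).2
      (mem_mul_deriv M hM u g τ (hτ.of_le (by simp)) h) r d
    simpa only [iteratedDeriv_succ', pow_succ', mul_assoc] using this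

/-- A smooth function with vanishing `k`-th derivative is a polynomial of degree `< k`. -/
theorem exists_sum_of_iteratedDeriv_eq_zero (k : ℕ) :
    ∀ τ : ℝ → ℝ, ContDiff ℝ ∞ τ → (∀ t, iteratedDeriv k τ t = 0) →
    ∃ c : ℕ → ℝ, ∀ t, τ t = ∑ j ∈ Finset.range k, c j * t ^ j := by
  induction k with
  | zero => intro τ _ h; exact ⟨0, by simpa using h⟩
  | succ k ih =>
    intro τ hτ h
    rw [iteratedDeriv_succ'] at h
    obtain ⟨hd, hτ'⟩ := contDiff_infty_iff_deriv.1 hτ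
    obtain ⟨c, hc⟩ := ih (deriv τ) hτ' h
    let P : ℝ → ℝ := fun t ↦ ∑ j ∈ Finset.range k, c j / (j + 1) * t ^ (j + 1)
    have hP : ∀ t, HasDerivAt P (deriv τ t) t := by
      intro t
      rw [hc]
      refine HasDerivAt.fun_sum fun j _ ↦ ?_
      refine ((hasDerivAt_pow (j + 1) t).const_mul (c j / (j + 1))).congr_deriv ?_
      have : (j : ℝ) + 1 ≠ 0 := by positivity
      rw [Nat.add_sub_cancel]
      push_cast
      field_simp
    have hconst : ∀ t, τ t - P t = τ 0 - P 0 := fun t ↦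
      is_const_of_deriv_eq_zero (f := fun t ↦ τ t - P t)
        (fun t ↦ ((hd t).hasDerivAt.sub (hP t)).differentiableAt)
        (fun t ↦ by simpa using ((hd t).hasDerivAt.fun_sub (hP t)).deriv) t 0
    have hP0 : P 0 = 0 := by simp [P]
    refine ⟨fun j ↦ if j = 0 then τ 0 else c (j - 1) / j, fun t ↦ ?_⟩
    rw [Finset.sum_range_succ']
    have := hconst t
    simp [P] at this ⊢
    linarith

/-- A closed subspace containing all `σ (r u + d)` also contains all `(φ * σ) (r u + d)`, for `φ`
continuous with compact support. -/
theorem mem_convolution {K : Type*} [TopologicalSpace K] [CompactSpace K]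
    (M : Submodule ℝ C(K, ℝ)) (hM : IsClosed (M : Set C(K, ℝ))) (u : C(K, ℝ))
    (σ φ : ℝ → ℝ) (hσ : Continuous σ) (hφ : Continuous φ) (hφs : HasCompactSupport φ)
    (h : ∀ r d : ℝ, ∃ m ∈ M, ∀ x, m x = σ (r * u x + d)) (r d : ℝ) :
    ∃ m ∈ M, ∀ x, m x =
      (convolution φ σ (ContinuousLinearMap.lsmul ℝ ℝ) volume) (r * u x + d) := by
  have hc : Continuous fun p : ℝ × K ↦ φ p.1 * σ (r * u p.2 + d - p.1) := by fun_prop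
  let H : C(ℝ, C(K, ℝ)) := ContinuousMap.curry ⟨_, hc⟩
  have hH : ∀ y x, H y x = φ y * σ (r * u x + d - y) := fun _ _ ↦ rfl
  have hHM : ∀ y, H y ∈ M := by
    intro y
    obtain ⟨m, hm, hmx⟩ := h r (d - y)
    have : H y = φ y • m := ContinuousMap.ext fun x ↦ by
      rw [hH, ContinuousMap.smul_apply, hmx, smul_eq_mul, add_sub_assoc]
    exact this ▸ M.smul_mem _ hm
  -- Integrating in the Banach space `M` itself keeps the integral in `M`.
  have : CompleteSpace M := hM.completeSpace_coe
  let H' : ℝ → M := fun y ↦ ⟨H y, hHM y⟩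
  have hH'c : Continuous H' := H.continuous.subtype_mk _
  have hH's : HasCompactSupport H' := hφs.mono fun y hy hφy ↦ hy <| by
    refine Subtype.ext (ContinuousMap.ext fun x ↦ ?_)
    change H y x = 0
    rw [hH, hφy, zero_mul]
  have hint : Integrable H' := hH'c.integrable_of_hasCompactSupport hH's
  refine ⟨_, (∫ y, H' y).2, fun x ↦ ?_⟩
  have h1 : ((∫ y, H' y : M) : C(K, ℝ)) = ∫ y, H y :=
    (ContinuousLinearMap.integral_comp_comm (𝕜 := ℝ) M.subtypeL hint).symm
  have hint' : Integrable H :=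
    ContinuousLinearMap.integrable_comp (𝕜 := ℝ) M.subtypeL hint
  rw [h1]
  exact ((ContinuousMap.evalCLM ℝ x).integral_comp_comm hint').symm

/-- A closed subspace containing all `σ (r u + d)`, with `σ` continuous and not a polynomial,
contains every power of `u`. -/
theorem pow_mem_of_not_polynomial {K : Type*} [TopologicalSpace K] [CompactSpace K]
    (M : Submodule ℝ C(K, ℝ)) (hM : IsClosed (M : Set C(K, ℝ))) (u : C(K, ℝ))
    (σ : ℝ → ℝ) (hσ : Continuous σ)
    (hσpoly : ¬ ∃ p : Polynomial ℝ, ∀ t : ℝ, σ t = Polynomial.eval t p)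
    (h : ∀ r d : ℝ, ∃ m ∈ M, ∀ x, m x = σ (r * u x + d)) (k : ℕ) :
    u ^ k ∈ M := by
  let φ : ℕ → ContDiffBump (0 : ℝ) := fun i ↦
    ⟨1 / ((i : ℝ) + 1) / 2, 1 / ((i : ℝ) + 1), by positivity, half_lt_self (by positivity)⟩
  let τ : ℕ → ℝ → ℝ := fun i ↦
    convolution ((φ i).normed volume) σ (ContinuousLinearMap.lsmul ℝ ℝ) volume
  have hτ : ∀ i, ContDiff ℝ ∞ (τ i) := fun i ↦
    (φ i).hasCompactSupport_normed.contDiff_convolution_left _ (φ i).contDiff_normed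
      hσ.locallyIntegrable
  obtain ⟨i, t, hit⟩ : ∃ i t, iteratedDeriv k (τ i) t ≠ 0 := by
    by_contra! hzero
    let V : Submodule ℝ (ℝ → ℝ) :=
      Submodule.span ℝ (Set.range fun (j : Fin k) (t : ℝ) ↦ t ^ (j : ℕ))
    have : FiniteDimensional ℝ V := FiniteDimensional.span_of_finite ℝ (Set.finite_range _)
    have hV : ∀ i, τ i ∈ V := by
      intro i
      obtain ⟨c, hc⟩ := exists_sum_of_iteratedDeriv_eq_zero k (τ i) (hτ i) (hzero i)
      have : τ i = ∑ j : Fin k, c j • fun t : ℝ ↦ t ^ (j : ℕ) := by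
        ext t
        simp [hc, Finset.sum_range]
      rw [this]
      exact V.sum_mem fun j _ ↦ V.smul_mem _ (Submodule.subset_span ⟨j, rfl⟩)
    have hlim : Tendsto τ atTop (𝓝 σ) := tendsto_pi_nhds.2 fun t ↦
      ContDiffBump.convolution_tendsto_right_of_continuous
        tendsto_one_div_add_atTop_nhds_zero_nat hσ t
    have hσV : σ ∈ V :=
      V.closed_of_finiteDimensional.mem_of_tendsto hlim (.of_forall hV)
    obtain ⟨c, hc⟩ := (Submodule.mem_span_range_iff_exists_fun ℝ).1 hσV
    refine hσpoly ⟨∑ j : Fin k, Polynomial.C (c j) * Polynomial.X ^ (j : ℕ), fun t ↦ ?_⟩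
    simp [← hc, Polynomial.eval_finsetSum]
  obtain ⟨m, hm, hmx⟩ := mem_mul_iteratedDeriv M hM u k 1 (τ i) (hτ i)
    (fun r d ↦ by
      simpa using mem_convolution M hM u σ _ hσ (φ i).continuous_normed
        (φ i).hasCompactSupport_normed h r d) 0 t
  have : u ^ k = (iteratedDeriv k (τ i) t)⁻¹ • m := ContinuousMap.ext fun x ↦ by
    rw [ContinuousMap.smul_apply, hmx]
    simp
    field_simp
  exact this ▸ M.smul_mem _ hm

theorem exp_mem_of_pow_mem {K : Type*} [TopologicalSpace K] [CompactSpace K]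
    (M : Submodule ℝ C(K, ℝ)) (hM : IsClosed (M : Set C(K, ℝ))) (u : C(K, ℝ))
    (h : ∀ k : ℕ, u ^ k ∈ M) : ∃ m ∈ M, ∀ x, m x = Real.exp (u x) := by
  refine ⟨NormedSpace.exp u, ?_, fun x ↦ ?_⟩
  · rw [NormedSpace.exp_eq_tsum ℝ]
    exact tsum_mem hM fun k ↦ M.smul_mem _ (h k)
  · rw [Real.exp_eq_exp_ℝ]
    exact NormedSpace.map_exp (ContinuousMap.evalAlgHom ℝ ℝ x) (continuous_eval_const x) u

/-- The exponential `(s, t) ↦ exp (b s + c t)` on the plane, indexed by `(b, c)`. -/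
noncomputable def planeExp (p : ℝ × ℝ) : C(ℝ × ℝ, ℝ) :=
  ⟨fun z ↦ Real.exp (p.1 * z.1 + p.2 * z.2), by fun_prop⟩

/-- Universal approximation in the plane: a subspace of `C(ℝ², ℝ)` containing all ridge functions
`σ (b s + c t + d)` is dense, for `σ` continuous and not a polynomial. -/
theorem dense_ridge (σ : ℝ → ℝ) (hσ : Continuous σ)
    (hσpoly : ¬ ∃ p : Polynomial ℝ, ∀ t : ℝ, σ t = Polynomial.eval t p)
    (N : Submodule ℝ C(ℝ × ℝ, ℝ))
    (hN : ∀ b c d : ℝ, ∃ m ∈ N, ∀ z, m z = σ (b * z.1 + c * z.2 + d)) :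
    Dense (N : Set C(ℝ × ℝ, ℝ)) := by
  -- The exponentials are closed under multiplication, so their span is the algebra `A`.
  let S : Submonoid C(ℝ × ℝ, ℝ) :=
    { carrier := Set.range planeExp
      one_mem' := ⟨0, by ext; simp [planeExp]⟩
      mul_mem' := by
        rintro _ _ ⟨p, rfl⟩ ⟨q, rfl⟩
        refine ⟨p + q, ?_⟩
        ext z
        simp [planeExp, ← Real.exp_add]
        ring }
  let A : Subalgebra ℝ C(ℝ × ℝ, ℝ) := Algebra.adjoin ℝ (S : Set C(ℝ × ℝ, ℝ))
  have hA : A.SeparatesPoints := by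
    intro z w hzw
    rcases not_and_or.1 (mt Prod.ext_iff.2 hzw) with h | h
    · exact ⟨_, ⟨planeExp (1, 0), Algebra.subset_adjoin ⟨_, rfl⟩, rfl⟩, by simpa [planeExp]⟩
    · exact ⟨_, ⟨planeExp (0, 1), Algebra.subset_adjoin ⟨_, rfl⟩, rfl⟩, by simpa [planeExp]⟩
  intro f
  -- A basic neighbourhood of `f` consists of the functions that are `ε`-close to `f` on `K`.
  rw [mem_closure_iff_nhds_basis
    (nhds_basis_uniformity' Metric.uniformity_basis_dist.compactConvergenceUniformity)]
  rintro ⟨K, ε⟩ ⟨hK, hε⟩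
  have : CompactSpace K := isCompact_iff_compactSpace.1 hK
  let R : C(ℝ × ℝ, ℝ) →L[ℝ] C(K, ℝ) :=
    { toFun := fun g ↦ g.comp ⟨Subtype.val, continuous_subtype_val⟩
      map_add' := fun _ _ ↦ rfl
      map_smul' := fun _ _ ↦ rfl
      cont := ContinuousMap.continuous_precomp _ }
  let M : Submodule ℝ C(K, ℝ) := (N.map (R : C(ℝ × ℝ, ℝ) →ₗ[ℝ] C(K, ℝ))).topologicalClosure
  have hM : IsClosed (M : Set C(K, ℝ)) := Submodule.isClosed_topologicalClosure _
  have hexp : ∀ p, R (planeExp p) ∈ M := by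
    intro p
    let u : C(K, ℝ) := ⟨fun z ↦ p.1 * z.1.1 + p.2 * z.1.2, by fun_prop⟩
    obtain ⟨m, hm, hmx⟩ := exp_mem_of_pow_mem M hM u
      (pow_mem_of_not_polynomial M hM u σ hσ hσpoly fun r d ↦ by
        obtain ⟨m, hm, hmz⟩ := hN (r * p.1) (r * p.2) d
        refine ⟨R m, Submodule.le_topologicalClosure _ ⟨m, hm, rfl⟩, fun x ↦ ?_⟩
        refine (hmz x).trans ?_
        congr 1
        change _ = r * (p.1 * x.1.1 + p.2 * x.1.2) + d
        ring)
    have : R (planeExp p) = m := ContinuousMap.ext fun x ↦ (hmx x).symm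
    exact this ▸ hm
  have hAM : ∀ g ∈ A, R g ∈ M := by
    have hle : Submodule.span ℝ (S : Set C(ℝ × ℝ, ℝ)) ≤
        M.comap (R : C(ℝ × ℝ, ℝ) →ₗ[ℝ] C(K, ℝ)) := by
      rw [Submodule.span_le]
      rintro _ ⟨p, rfl⟩
      exact hexp p
    intro g hg
    have hg' : g ∈ Subalgebra.toSubmodule A := hg
    rw [Algebra.adjoin_eq_span, Submonoid.closure_eq] at hg'
    exact hle hg'
  obtain ⟨g, hgA, hg⟩ :=
    ContinuousMap.exists_mem_subalgebra_near_continuous_of_isCompact_of_separatesPoints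
      hA f hK (half_pos hε)
  obtain ⟨_, ⟨m, hm, rfl⟩, hgm⟩ := Metric.mem_closure_iff.1 (hAM g hgA) (ε / 2) (half_pos hε)
  refine ⟨m, hm, fun x hx ↦ ?_⟩
  have h1 : dist (g x) (m x) < ε / 2 := (ContinuousMap.dist_apply_le_dist ⟨x, hx⟩).trans_lt hgm
  have h2 : dist (g x) (f x) < ε / 2 := by rw [dist_eq_norm]; exact hg x hx
  change dist (f x) (m x) < ε
  linarith [dist_triangle_left (f x) (m x) (g x)]

theorem stmt_17 (n : ℕ) (hn : 1 ≤ n) (σ : ℝ → ℝ) (hσcont : Continuous σ)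
    (hσpoly : ¬ ∃ p : Polynomial ℝ, ∀ t : ℝ, σ t = Polynomial.eval t p) :
    closure {g : C(Fin n → ℝ, ℝ) |
        ∃ (h : ℕ) (a b c d : Fin h → ℝ), ∀ x,
          g x = ∑ j, a j * ∑ i, σ (b j * x i + c j * (∑ k, x k) + d j)} =
      closure {g : C(Fin n → ℝ, ℝ) |
        ∃ f : C(ℝ × ℝ, ℝ), ∀ x, g x = ∑ i, f (x i, ∑ k, x k)} := by
  let ridge : ℝ × ℝ × ℝ → C(ℝ × ℝ, ℝ) := fun q ↦
    ⟨fun z ↦ σ (q.1 * z.1 + q.2.1 * z.2 + q.2.2), by fun_prop⟩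
  let N : Submodule ℝ C(ℝ × ℝ, ℝ) := Submodule.span ℝ (Set.range ridge)
  have hN : Dense (N : Set C(ℝ × ℝ, ℝ)) := dense_ridge σ hσcont hσpoly N fun b c d ↦
    ⟨ridge (b, c, d), Submodule.subset_span ⟨_, rfl⟩, fun _ ↦ rfl⟩
  let T : C(ℝ × ℝ, ℝ) → C(Fin n → ℝ, ℝ) := fun f ↦
    ∑ i, f.comp ⟨fun x ↦ (x i, ∑ k, x k), by fun_prop⟩
  have hT : ∀ f x, T f x = ∑ i, f (x i, ∑ k, x k) := fun f x ↦ by simp [T]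
  have hTc : Continuous T :=
    continuous_finsetSum Finset.univ fun i _ ↦ ContinuousMap.continuous_precomp _
  apply subset_antisymm
  · refine closure_mono ?_
    rintro g ⟨h, a, b, c, d, hg⟩
    refine ⟨∑ j, a j • ridge (b j, c j, d j), fun x ↦ ?_⟩
    simp only [hg, ContinuousMap.sum_apply, ContinuousMap.smul_apply, smul_eq_mul]
    rw [Finset.sum_comm]
    exact Finset.sum_congr rfl fun j _ ↦ Finset.mul_sum ..
  · refine closure_minimal ?_ isClosed_closure
    rintro g ⟨f, hf⟩
    have hg : g = T f := ContinuousMap.ext fun x ↦ by rw [hf, hT]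
    rw [hg]
    refine closure_mono ?_ (image_closure_subset_closure_image hTc ⟨f, hN f, rfl⟩)
    rintro _ ⟨m, hm, rfl⟩
    obtain ⟨h, a, v, rfl⟩ := Submodule.mem_span_set'.1 hm
    choose q hq using fun j ↦ (v j).2
    refine ⟨h, a, fun j ↦ (q j).1, fun j ↦ (q j).2.1, fun j ↦ (q j).2.2, fun x ↦ ?_⟩
    simp only [hT, ContinuousMap.sum_apply, ContinuousMap.smul_apply, smul_eq_mul, ← hq]
    rw [Finset.sum_comm]
    exact Finset.sum_congr rfl fun j _ ↦ (Finset.mul_sum ..).symm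
end

section
/- Let σ : ℝ → ℝ be a continuous function that is not a polynomial, and let n ≥ 1. Then the closure, in the topology of uniform convergence on compact sets, of the set of all functions ℝⁿ → ℝ of the form x ↦ Σ_{j=1}^h a_j Σ_{i=1}^n σ(b_j x_i + c_j), ranging over all widths h ∈ ℕ and all real parameters a_j, b_j, c_j, equals the closure of the set {x ↦ Σ_{i=1}^n f(x_i) : f ∈ C(ℝ)}. -/
/-! The hidden units and the output sum act coordinatewise, so everything reduces to the
one-variable theorem that the functions `x ↦ ∑ⱼ aⱼ σ(bⱼ x + cⱼ)` are dense in `C(ℝ)`: if such a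
function is `ε / n`-close to `f` on `[-R, R]`, its symmetric sum is `ε`-close to `∑ᵢ f(xᵢ)` on
`[-R, R]ⁿ`. The opposite inclusion is immediate, since each network is itself `∑ᵢ f(xᵢ)`.

For the one-variable theorem, let `S` be the closed span of the functions `σ(bx + c)` in
`C([-R, R])`. If `φ` is a smooth bump function and `τ = φ ⋆ σ`, then `τ(bx + c)` lies in `S`, being
an integral of translates (`ridge_convolution_mem`). Differentiating `k` times in `b` at `b = 0`
gives `xᵏ τ⁽ᵏ⁾(c) ∈ S` (`ridge_iteratedDeriv_mem`). If `xᵏ ∉ S` for some `k`, then `τ⁽ᵏ⁾ = 0` for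
every `φ`, so all mollifications of `σ` are polynomials of degree `< k`. The bound on the degree
does not depend on `φ`, so their pointwise limit `σ` is a polynomial as well (`ridge_pow_mem`), which is
excluded. Hence `S` contains all polynomials and Weierstrass' theorem concludes. -/

open MeasureTheory Filter Topology Set
open scoped ContDiff Convolution

/-- The function `x ↦ x ^ k * g (b * x + c)` as a continuous function on `[-R, R]`. It is the
`k`-th derivative with respect to `b` of `x ↦ τ (b * x + c)` when `g = τ⁽ᵏ⁾`. -/
noncomputable def ridge (R : ℝ) (k : ℕ) (g : C(ℝ, ℝ)) (b c : ℝ) : C(Icc (-R) R, ℝ) where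
  toFun x := (x : ℝ) ^ k * g (b * x + c)

@[simp] lemma ridge_apply (R : ℝ) (k : ℕ) (g : C(ℝ, ℝ)) (b c : ℝ) (x : Icc (-R) R) :
    ridge R k g b c x = (x : ℝ) ^ k * g (b * x + c) := rfl

lemma continuous_ridge (R : ℝ) (k : ℕ) (g : C(ℝ, ℝ)) {X : Type*} [TopologicalSpace X]
    {b c : X → ℝ} (hb : Continuous b) (hc : Continuous c) :
    Continuous fun s => ridge R k g (b s) (c s) := by
  refine ContinuousMap.continuous_of_continuous_uncurry _ ?_
  simp only [Function.uncurry_def, ridge_apply]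
  fun_prop

/-- Differentiating in the slope `b` is legitimate in the sup norm of `C([-R, R])`, because
`b ↦ x ^ (k + 1) * g' (b * x + c)` is norm-continuous and its `C([-R, R])`-valued integral is
`x ^ k * g (b * x + c)` up to a constant. -/
lemma hasDerivAt_ridge (R : ℝ) (k : ℕ) (g g' : C(ℝ, ℝ)) (hg : ∀ t, HasDerivAt g (g' t) t)
    (b c : ℝ) : HasDerivAt (fun s => ridge R k g s c) (ridge R (k + 1) g' b c) b := by
  have hcont : Continuous fun s => ridge R (k + 1) g' s c :=
    continuous_ridge R _ g' continuous_id continuous_const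
  have key : (fun s => ridge R k g s c) =
      fun s => (∫ u in (0 : ℝ)..s, ridge R (k + 1) g' u c) + ridge R k g 0 c := by
    funext s
    rw [← sub_eq_iff_eq_add]
    ext x
    have h1 := (ContinuousMap.evalCLM (M := ℝ) ℝ x).intervalIntegral_comp_comm
      (hcont.intervalIntegrable (μ := volume) 0 s)
    refine Eq.trans ?_ h1
    change _ = ∫ u in (0 : ℝ)..s, ridge R (k + 1) g' u c x
    have hd : ∀ u ∈ uIcc 0 s,
        HasDerivAt (fun u : ℝ => ridge R k g u c x) (ridge R (k + 1) g' u c x) u := by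
      intro u _
      have h2 : HasDerivAt (fun u : ℝ => u * (x : ℝ) + c) (x : ℝ) u := by
        simpa using ((hasDerivAt_id u).mul_const (x : ℝ)).add_const c
      have h3 := ((hg (u * x + c)).comp u h2).const_mul ((x : ℝ) ^ k)
      refine h3.congr_deriv ?_
      simp only [ridge_apply]; ring
    rw [intervalIntegral.integral_eq_sub_of_hasDerivAt hd]
    · rfl
    · exact Continuous.intervalIntegrable (by simp only [ridge_apply]; fun_prop) _ _
  rw [key]
  exact (hcont.integral_hasStrictDerivAt 0 b).hasDerivAt.add_const _

lemma deriv_mem_of_isClosed {E : Type*} [NormedAddCommGroup E] [NormedSpace ℝ E]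
    (S : Submodule ℝ E) (hS : IsClosed (S : Set E)) {f : ℝ → E} (hf : ∀ t, f t ∈ S) {f' : E}
    {t : ℝ} (h : HasDerivAt f f' t) : f' ∈ S := by
  refine hS.mem_of_tendsto (hasDerivAt_iff_tendsto_slope_zero.1 h) (.of_forall fun s => ?_)
  exact S.smul_mem _ (S.sub_mem (hf _) (hf _))

lemma integral_mem_of_isClosed {E : Type*} [NormedAddCommGroup E] [NormedSpace ℝ E]
    [CompleteSpace E] (S : Submodule ℝ E) (hS : IsClosed (S : Set E)) {f : ℝ → E}
    (hf : ∀ t, f t ∈ S) : ∫ t, f t ∈ S := by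
  have : CompleteSpace S := hS.completeSpace_coe
  have h := S.subtypeₗᵢ.integral_comp_comm (μ := volume) (fun t => (⟨f t, hf t⟩ : S))
  change ∫ t, f t = _ at h
  rw [h]
  exact Subtype.coe_prop _

/-- If a closed subspace of `C([-R, R])` contains `x ↦ τ (b * x + c)` for all `b`, `c`, with `τ`
smooth, it contains all derivatives of these functions with respect to `b`. -/
lemma ridge_iteratedDeriv_mem (R : ℝ) (S : Submodule ℝ C(Icc (-R) R, ℝ))
    (hS : IsClosed (S : Set C(Icc (-R) R, ℝ))) (τ : C(ℝ, ℝ)) (hτ : ContDiff ℝ ∞ τ)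
    (h : ∀ b c, ridge R 0 τ b c ∈ S) (k : ℕ) (b c : ℝ) :
    ridge R k ⟨iteratedDeriv k τ, hτ.continuous_iteratedDeriv k (by exact_mod_cast le_top)⟩ b c
      ∈ S := by
  induction k generalizing b with
  | zero =>
    convert h b c using 1
    ext x; simp
  | succ k ih =>
    refine deriv_mem_of_isClosed S hS (fun s => ih s) (hasDerivAt_ridge R k _ _ (fun t => ?_) b c)
    simp only [ContinuousMap.coe_mk]
    rw [iteratedDeriv_succ]
    exact ((hτ.differentiable_iteratedDeriv k (by exact_mod_cast ENat.natCast_lt_top k)) t).hasDerivAt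

/-- Mollifying `σ` does not leave the closed subspace: the mollification is a norm-convergent
integral of translates of `σ`. -/
lemma ridge_convolution_mem (R : ℝ) (S : Submodule ℝ C(Icc (-R) R, ℝ))
    (hS : IsClosed (S : Set C(Icc (-R) R, ℝ))) (σ : C(ℝ, ℝ))
    (h : ∀ b c, ridge R 0 σ b c ∈ S) (φ : ℝ → ℝ) (hφ : Continuous φ) (hφc : HasCompactSupport φ)
    (τ : C(ℝ, ℝ)) (hτ : ∀ t, τ t = (φ ⋆[ContinuousLinearMap.lsmul ℝ ℝ, volume] σ) t) (b c : ℝ) :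
    ridge R 0 τ b c ∈ S := by
  have hint : Integrable fun s => φ s • ridge R 0 σ b (c - s) := by
    refine Continuous.integrable_of_hasCompactSupport ?_ hφc.smul_right
    exact hφ.smul (continuous_ridge R 0 σ continuous_const (by fun_prop))
  have key : ridge R 0 τ b c = ∫ s, φ s • ridge R 0 σ b (c - s) := by
    ext x
    have h1 := (ContinuousMap.evalCLM (M := ℝ) ℝ x).integral_comp_comm hint
    change _ = (ContinuousMap.evalCLM (M := ℝ) ℝ x) _
    rw [← h1]
    simp only [ridge_apply, hτ, convolution_def, pow_zero, one_mul]
    refine integral_congr_ae (.of_forall fun s => ?_)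
    simp [add_sub_assoc]
  rw [key]
  exact integral_mem_of_isClosed S hS fun s => S.smul_mem _ (h _ _)

lemma exists_coeff_of_iteratedDeriv_eq_zero (k : ℕ) (τ : ℝ → ℝ) (hτ : ContDiff ℝ ∞ τ)
    (h : ∀ t, iteratedDeriv k τ t = 0) :
    ∃ a : Fin k → ℝ, ∀ t, τ t = ∑ i, a i * t ^ (i : ℕ) := by
  induction k generalizing τ with
  | zero => exact ⟨0, fun t => by simpa using h t⟩
  | succ k ih =>
    obtain ⟨a, ha⟩ := ih (deriv τ) ((contDiff_infty_iff_deriv.1 hτ).2) fun t => by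
      rw [← iteratedDeriv_succ']; exact h t
    -- The primitive of `∑ aᵢ tⁱ` differs from `τ` by a constant.
    let q : ℝ → ℝ := fun t => ∑ i : Fin k, a i / (i + 1) * t ^ ((i : ℕ) + 1)
    have hq : ∀ t, HasDerivAt q (deriv τ t) t := by
      intro t
      rw [ha]
      refine HasDerivAt.fun_sum fun i _ => ?_
      refine ((hasDerivAt_pow ((i : ℕ) + 1) t).const_mul (a i / (i + 1))).congr_deriv ?_
      have : ((i : ℕ) : ℝ) + 1 ≠ 0 := by positivity
      push_cast
      field_simp
    have hd : ∀ t, HasDerivAt (fun t => τ t - q t) 0 t := fun t => by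
      have := ((contDiff_infty_iff_deriv.1 hτ).1 t).hasDerivAt.sub (hq t)
      rwa [sub_self] at this
    have hc : ∀ t, τ t - q t = τ 0 - q 0 := fun t =>
      is_const_of_deriv_eq_zero (fun t => (hd t).differentiableAt) (fun t => (hd t).deriv) t 0
    refine ⟨Fin.cons (τ 0 - q 0) fun i => a i / (i + 1), fun t => ?_⟩
    rw [Fin.sum_univ_succ]
    simp only [Fin.cons_zero, Fin.cons_succ, Fin.val_zero, pow_zero, mul_one, Fin.val_succ]
    rw [← hc t]
    simp [q]

/-- Functions with a polynomial expression of bounded degree are closed under pointwise limits,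
because they form a finite-dimensional subspace of `ℝ → ℝ`. -/
lemma exists_coeff_of_tendsto (k : ℕ) (F : ℕ → ℝ → ℝ) (f : ℝ → ℝ)
    (hF : ∀ m, ∃ a : Fin k → ℝ, ∀ t, F m t = ∑ i, a i * t ^ (i : ℕ))
    (hlim : ∀ t, Tendsto (fun m => F m t) atTop (𝓝 (f t))) :
    ∃ a : Fin k → ℝ, ∀ t, f t = ∑ i, a i * t ^ (i : ℕ) := by
  let P : Submodule ℝ (ℝ → ℝ) := Submodule.span ℝ (range fun (i : Fin k) (t : ℝ) => t ^ (i : ℕ))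
  have hP : ∀ g : ℝ → ℝ, g ∈ P ↔ ∃ a : Fin k → ℝ, ∀ t, g t = ∑ i, a i * t ^ (i : ℕ) := by
    intro g
    rw [Submodule.mem_span_range_iff_exists_fun]
    refine exists_congr fun a => ?_
    rw [funext_iff]
    refine forall_congr' fun t => ?_
    simp [eq_comm, Finset.sum_apply]
  have : FiniteDimensional ℝ P := FiniteDimensional.span_of_finite ℝ (finite_range _)
  have hcl : IsClosed (P : Set (ℝ → ℝ)) := Submodule.closed_of_finiteDimensional P
  exact (hP f).1 (hcl.mem_of_tendsto (tendsto_pi_nhds.2 hlim)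
    (.of_forall fun m => (hP _).2 (hF m)))

/-- If some monomial `xᵏ` is missing from a closed subspace containing all `σ (b * x + c)`, then
every mollification of `σ` is a polynomial of degree `< k`, hence so is `σ`. -/
lemma ridge_pow_mem (R : ℝ) (S : Submodule ℝ C(Icc (-R) R, ℝ))
    (hS : IsClosed (S : Set C(Icc (-R) R, ℝ))) (σ : C(ℝ, ℝ))
    (hσ : ¬ ∃ p : Polynomial ℝ, ∀ t : ℝ, σ t = Polynomial.eval t p)
    (h : ∀ b c, ridge R 0 σ b c ∈ S) (k : ℕ) : ridge R k 1 0 0 ∈ S := by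
  by_contra hk
  apply hσ
  let φ : ℕ → ContDiffBump (0 : ℝ) := fun m =>
    ⟨1 / ((m : ℝ) + 1) / 2, 1 / ((m : ℝ) + 1), by positivity, half_lt_self (by positivity)⟩
  have hφ : Tendsto (fun m => (φ m).rOut) atTop (𝓝 0) := tendsto_one_div_add_atTop_nhds_zero_nat
  have hlim := fun t => ContDiffBump.convolution_tendsto_right_of_continuous (μ := volume) hφ
    σ.continuous t
  suffices hpol : ∀ m, ∃ a : Fin k → ℝ, ∀ t,
      ((φ m).normed volume ⋆[ContinuousLinearMap.lsmul ℝ ℝ, volume] σ) t =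
        ∑ i, a i * t ^ (i : ℕ) by
    obtain ⟨a, ha⟩ := exists_coeff_of_tendsto k _ σ hpol hlim
    refine ⟨∑ i, Polynomial.C (a i) * Polynomial.X ^ (i : ℕ), fun t => ?_⟩
    simp [ha, Polynomial.eval_finsetSum]
  intro m
  have hsm : ContDiff ℝ ∞ (((φ m).normed volume) ⋆[ContinuousLinearMap.lsmul ℝ ℝ, volume] σ) :=
    (φ m).hasCompactSupport_normed.contDiff_convolution_left _ (φ m).contDiff_normed
      σ.continuous.locallyIntegrable
  refine exists_coeff_of_iteratedDeriv_eq_zero k _ hsm fun t => ?_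
  by_contra ht
  apply hk
  have hmem := ridge_iteratedDeriv_mem R S hS ⟨_, hsm.continuous⟩ hsm
    (ridge_convolution_mem R S hS σ h _ (φ m).continuous_normed (φ m).hasCompactSupport_normed
      _ fun t => rfl) k 0 t
  -- At slope `0` the `k`-th derivative is `xᵏ` times the nonzero constant `τ⁽ᵏ⁾(t)`.
  convert S.smul_mem (iteratedDeriv k
    (((φ m).normed volume) ⋆[ContinuousLinearMap.lsmul ℝ ℝ, volume] σ) t)⁻¹ hmem using 1
  ext x
  simp only [ridge_apply, ContinuousMap.one_apply, ContinuousMap.smul_apply, smul_eq_mul,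
    ContinuousMap.coe_mk, zero_mul, zero_add]
  field_simp

/-- Density of one-variable shallow networks with a continuous non-polynomial activation. -/
lemma exists_network_near (σ : C(ℝ, ℝ))
    (hσ : ¬ ∃ p : Polynomial ℝ, ∀ t : ℝ, σ t = Polynomial.eval t p) (f : C(ℝ, ℝ)) (R ε : ℝ)
    (hε : 0 < ε) :
    ∃ (h : ℕ) (a b c : Fin h → ℝ), ∀ x ∈ Icc (-R) R,
      |f x - ∑ j, a j * σ (b j * x + c j)| < ε := by
  let S₀ : Submodule ℝ C(Icc (-R) R, ℝ) :=
    Submodule.span ℝ (range fun p : ℝ × ℝ => ridge R 0 σ p.1 p.2)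
  let S := S₀.topologicalClosure
  have hS : IsClosed (S : Set C(Icc (-R) R, ℝ)) := S₀.isClosed_topologicalClosure
  have hpow := ridge_pow_mem R S hS σ hσ fun b c =>
    S₀.le_topologicalClosure (Submodule.subset_span ⟨(b, c), rfl⟩)
  have hpoly : ((polynomialFunctions (Icc (-R) R) : Subalgebra ℝ _) :
      Set C(Icc (-R) R, ℝ)) ⊆ S := by
    rw [polynomialFunctions_coe]
    rintro _ ⟨p, rfl⟩
    have : Polynomial.toContinuousMapOnAlgHom (Icc (-R) R) p =
        ∑ i ∈ Finset.range (p.natDegree + 1), p.coeff i • ridge R i 1 0 0 := by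
      ext x
      simp [Polynomial.eval_eq_sum_range, ContinuousMap.sum_apply]
    rw [this]
    exact S.sum_mem fun i _ => S.smul_mem _ (hpow i)
  have hf : f.restrict (Icc (-R) R) ∈ closure (S₀ : Set C(Icc (-R) R, ℝ)) := by
    have h1 := continuousMap_mem_polynomialFunctions_closure (-R) R (f.restrict (Icc (-R) R))
    exact closure_minimal hpoly hS h1
  obtain ⟨g, hg, hfg⟩ := Metric.mem_closure_iff.1 hf ε hε
  obtain ⟨l, hl⟩ := Finsupp.mem_span_range_iff_exists_finsupp.1 hg
  let e := l.support.equivFin.symm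
  refine ⟨_, fun j => l (e j), fun j => (e j : ℝ × ℝ).1, fun j => (e j : ℝ × ℝ).2,
    fun x hx => ?_⟩
  have hgx : g ⟨x, hx⟩ = ∑ j, l (e j) * σ ((e j : ℝ × ℝ).1 * x + (e j : ℝ × ℝ).2) := by
    rw [e.sum_comp (fun p : l.support => l p * σ ((p : ℝ × ℝ).1 * x + (p : ℝ × ℝ).2)),
      Finset.sum_coe_sort l.support (fun p : ℝ × ℝ => l p * σ (p.1 * x + p.2)), ← hl,
      Finsupp.sum, ContinuousMap.sum_apply]
    simp
  rw [← hgx]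
  exact ((ContinuousMap.dist_apply_le_dist (f := f.restrict (Icc (-R) R)) (g := g)
    ⟨x, hx⟩).trans_lt hfg)

/-- Let `σ : ℝ → ℝ` be continuous and not a polynomial, and `n ≥ 1`. The
closure (uniform convergence on compact sets) of the set of shallow invariant networks with
width-1 circular convolutional hidden layers, `x ↦ ∑_{j=1}^h a_j ∑ i, σ (b_j * x i + c_j)`
(over all widths `h` and real parameters), equals the closure of the symmetric superposition
class `{x ↦ ∑ i, f (x i) : f ∈ C(ℝ)}`. -/
theorem stmt_18 (n : ℕ) (hn : 1 ≤ n) (σ : ℝ → ℝ) (hσcont : Continuous σ)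
    (hσpoly : ¬ ∃ p : Polynomial ℝ, ∀ t : ℝ, σ t = Polynomial.eval t p) :
    closure {g : C(Fin n → ℝ, ℝ) |
        ∃ (h : ℕ) (a b c : Fin h → ℝ), ∀ x,
          g x = ∑ j, a j * ∑ i, σ (b j * x i + c j)} =
      closure {g : C(Fin n → ℝ, ℝ) |
        ∃ f : C(ℝ, ℝ), ∀ x, g x = ∑ i, f (x i)} := by
  have hswap : ∀ (h : ℕ) (a b c : Fin h → ℝ) (x : Fin n → ℝ),
      ∑ j, a j * ∑ i, σ (b j * x i + c j) = ∑ i, ∑ j, a j * σ (b j * x i + c j) := by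
    intro h a b c x
    simp_rw [Finset.mul_sum]
    exact Finset.sum_comm
  apply subset_antisymm
  · refine closure_mono ?_
    rintro g ⟨h, a, b, c, hg⟩
    exact ⟨⟨fun t => ∑ j, a j * σ (b j * t + c j), by fun_prop⟩, fun x => by
      rw [hg, hswap]; rfl⟩
  · refine closure_minimal ?_ isClosed_closure
    rintro g ⟨f, hg⟩
    rw [mem_closure_iff_nhds_basis' (nhds_basis_uniformity' (Metric.uniformity_basis_dist.compactConvergenceUniformity
      (α := Fin n → ℝ)))]
    rintro ⟨K, ε⟩ ⟨hK, hε⟩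
    have hn' : (0 : ℝ) < n := by exact_mod_cast hn
    obtain ⟨R, hR⟩ := hK.isBounded.subset_closedBall 0
    obtain ⟨h, a, b, c, happ⟩ := exists_network_near ⟨σ, hσcont⟩ hσpoly f R (ε / n) (by positivity)
    refine ⟨⟨fun x => ∑ j, a j * ∑ i, σ (b j * x i + c j), by fun_prop⟩,
      ?_, ⟨h, a, b, c, fun x => rfl⟩⟩
    intro x hx
    change dist (g x) (∑ j, a j * ∑ i, σ (b j * x i + c j)) < ε
    rw [hg, hswap, Real.dist_eq, ← Finset.sum_sub_distrib]
    have hxR : ∀ i, x i ∈ Icc (-R) R := fun i => by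
      have h1 : ‖x‖ ≤ R := by simpa using hR hx
      exact abs_le.1 ((norm_le_pi_norm x i).trans h1)
    have : Nonempty (Fin n) := ⟨⟨0, hn⟩⟩
    calc |∑ i, (f (x i) - ∑ j, a j * σ (b j * x i + c j))|
        ≤ ∑ i, |f (x i) - ∑ j, a j * σ (b j * x i + c j)| := Finset.abs_sum_le_sum_abs _ _
      _ < ∑ _i : Fin n, ε / n :=
        Finset.sum_lt_sum_of_nonempty Finset.univ_nonempty fun i _ => happ _ (hxR i)
      _ = ε := by
        simp only [Finset.sum_const, Finset.card_univ, Fintype.card_fin, nsmul_eq_mul]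
        field_simp
end
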